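/- arXiv:1506.07756 — 3 statements merged into one kernel-verified Lean document; each statement's English description precedes it below -/
import Mathlib

section
/- Let ρ be a density operator on H = H_1 ⊗ … ⊗ H_n and N = {N_j} a neighborhood structure. If ρ is FFQLS relative to N, then span(ρ) = ∩_j [F_{ρ_{N_j}}(Σ_{N_j}(ρ)) ⊗ B(H_{N̄_j})], i.e., the complex span of ρ equals the intersection over all neighborhoods of the extended minimal modular-invariant distorted algebras generated by the neighborhood operator Schmidt spans of ρ. -/
namespace QDS

open Matrix
open scoped ComplexOrder

/-! ### Basic single-system notions -/

section Single

variable {ι : Type*} [Fintype ι] [DecidableEq ι]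

open Classical in
/-- The (unique) positive-semidefinite square root of a positive-semidefinite matrix
(junk value `0` if no positive-semidefinite square root exists). -/
noncomputable def msqrt (A : Matrix ι ι ℂ) : Matrix ι ι ℂ :=
  if h : ∃ B : Matrix ι ι ℂ, B.PosSemidef ∧ B * B = A then h.choose else 0

open Classical in
/-- The Moore–Penrose pseudoinverse of a matrix, defined via its characterizing
properties (it always exists and is unique for complex matrices). -/
noncomputable def mpinv (A : Matrix ι ι ℂ) : Matrix ι ι ℂ :=
  if h : ∃ B : Matrix ι ι ℂ,
      A * B * A = A ∧ B * A * B = B ∧ (A * B)ᴴ = A * B ∧ (B * A)ᴴ = B * A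
  then h.choose else 0

/-- A density operator: positive semidefinite with unit trace. -/
def IsDensity (ρ : Matrix ι ι ℂ) : Prop := ρ.PosSemidef ∧ ρ.trace = 1

/-- A CPTP map in Kraus (operator-sum) form. -/
def IsCPTP (T : Matrix ι ι ℂ →ₗ[ℂ] Matrix ι ι ℂ) : Prop :=
  ∃ (m : ℕ) (M : Fin m → Matrix ι ι ℂ),
    (∀ X, T X = ∑ k, M k * X * (M k)ᴴ) ∧ (∑ k, (M k)ᴴ * M k) = 1

/-- The Lindblad (QDS) generator with Hamiltonian `Hm` and noise operators `Lk`: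
`L(X) = -i[Hm, X] + Σₖ (Lₖ X Lₖ† - ½{Lₖ†Lₖ, X})`. -/
noncomputable def lindbladMap (Hm : Matrix ι ι ℂ) {m : ℕ} (Lk : Fin m → Matrix ι ι ℂ) :
    Matrix ι ι ℂ →ₗ[ℂ] Matrix ι ι ℂ :=
  (-Complex.I) • (LinearMap.mulLeft ℂ Hm - LinearMap.mulRight ℂ Hm) +
    ∑ k, ((LinearMap.mulRight ℂ (Lk k)ᴴ).comp (LinearMap.mulLeft ℂ (Lk k)) -
      ((1 : ℂ)/2) • (LinearMap.mulLeft ℂ ((Lk k)ᴴ * Lk k) +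
        LinearMap.mulRight ℂ ((Lk k)ᴴ * Lk k)))

/-- `L` is a QDS (Lindblad) generator. -/
def IsLindblad (L : Matrix ι ι ℂ →ₗ[ℂ] Matrix ι ι ℂ) : Prop :=
  ∃ Hm : Matrix ι ι ℂ, Hm.IsHermitian ∧
    ∃ (m : ℕ) (Lk : Fin m → Matrix ι ι ℂ), L = lindbladMap Hm Lk

/-- `Ld` is the Hilbert–Schmidt adjoint of `L` (w.r.t. `⟨X,Y⟩ = Tr(X†Y)`). -/
def IsHSAdjoint (L Ld : Matrix ι ι ℂ →ₗ[ℂ] Matrix ι ι ℂ) : Prop :=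
  ∀ X Y : Matrix ι ι ℂ, ((Ld X)ᴴ * Y).trace = (Xᴴ * L Y).trace

/-- The fixed-point set of a (super)operator. -/
def fixSet (T : Matrix ι ι ℂ →ₗ[ℂ] Matrix ι ι ℂ) : Set (Matrix ι ι ℂ) := {X | T X = X}

/-- The support of an operator: the orthogonal complement of its kernel,
equivalently the range of its adjoint. -/
noncomputable def msupp (A : Matrix ι ι ℂ) : Submodule ℂ (ι → ℂ) := LinearMap.range (Aᴴ).mulVecLin

/-- The support of a set of operators: the span of the union of their supports. -/
noncomputable def suppSet (W : Set (Matrix ι ι ℂ)) : Submodule ℂ (ι → ℂ) := ⨆ O ∈ W, msupp O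

/-- The minimal modular-invariant distorted algebra generated by `W` relative to `ρ`:
the smallest subspace containing `W` that is closed under the adjoint, under the
`ρ`-modified product `(X,Y) ↦ X ρ⁻ Y`, and under the modular map `X ↦ ρ^{1/2} X ρ⁻^{1/2}`. -/
noncomputable def Fdist (ρ : Matrix ι ι ℂ) (W : Set (Matrix ι ι ℂ)) :
    Submodule ℂ (Matrix ι ι ℂ) :=
  sInf {S : Submodule ℂ (Matrix ι ι ℂ) | W ⊆ S ∧ (∀ X ∈ S, Xᴴ ∈ S) ∧
    (∀ X ∈ S, ∀ Y ∈ S, X * mpinv ρ * Y ∈ S) ∧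
    (∀ X ∈ S, msqrt ρ * X * mpinv (msqrt ρ) ∈ S)}

/-- `ρ` is globally asymptotically stable for the generator `L`: it is invariant and every
solution of `ẋ = L(x)` starting at a density operator converges to `ρ` as `t → ∞`. -/
def IsGAS (L : Matrix ι ι ℂ →ₗ[ℂ] Matrix ι ι ℂ) (ρ : Matrix ι ι ℂ) : Prop :=
  L ρ = 0 ∧
  ∀ σ : Matrix ι ι ℂ, IsDensity σ →
    ∀ x : ℝ → Matrix ι ι ℂ, x 0 = σ →
      (∀ t : ℝ, ∀ i j, HasDerivAt (fun s : ℝ => x s i j) (L (x t) i j) t) →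
      ∀ i j, Filter.Tendsto (fun t : ℝ => x t i j) Filter.atTop (nhds (ρ i j))

end Single

/-! ### Bipartite notions -/

section Bipartite

variable {α β : Type*} [Fintype α] [Fintype β] [DecidableEq α] [DecidableEq β]

/-- Partial trace over the second factor. -/
noncomputable def ptraceB (ρ : Matrix (α × β) (α × β) ℂ) : Matrix α α ℂ :=
  Matrix.of fun i j => ∑ k : β, ρ (i, k) (j, k)

/-- The operator Schmidt span of `ρ` on the first factor:
`{Tr_B[(I ⊗ B) ρ] : B ∈ B(H_B)}`. -/
noncomputable def opSchmidtA (ρ : Matrix (α × β) (α × β) ℂ) : Set (Matrix α α ℂ) :=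
  {A | ∃ B : Matrix β β ℂ,
    A = ptraceB ((Matrix.kroneckerMap (· * ·) (1 : Matrix α α ℂ) B) * ρ)}

/-- The (vector) Schmidt span of `v ∈ V_A ⊗ V_B` relative to `V_A`: the image of `v`
under partial inner products with vectors of `V_B`. -/
def vSchmidtA (v : α × β → ℂ) : Set (α → ℂ) :=
  {w | ∃ b : β → ℂ, w = fun a => ∑ j, (starRingEnd ℂ) (b j) * v (a, j)}

/-- `Σ_A(v) ⊗ V_B` as a subspace of `V_A ⊗ V_B`. -/
noncomputable def extVSchmidtA (v : α × β → ℂ) : Submodule ℂ (α × β → ℂ) :=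
  Submodule.span ℂ {v' | ∃ w ∈ vSchmidtA v, ∃ b : β → ℂ, v' = fun p => w p.1 * b p.2}

end Bipartite

/-! ### Multipartite notions -/

section Multipartite

variable {n : ℕ} {d : Fin n → Type*} [∀ a, Fintype (d a)] [∀ a, DecidableEq (d a)]

/-- Index type of the neighborhood factor `H_N`. -/
abbrev nbhdIdx (d : Fin n → Type*) (N : Finset (Fin n)) : Type _ :=
  ∀ a : {x : Fin n // x ∈ N}, d a

/-- Index type of the complementary factor `H_N̄`. -/
abbrev nbhdCoIdx (d : Fin n → Type*) (N : Finset (Fin n)) : Type _ :=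
  ∀ a : {x : Fin n // ¬ x ∈ N}, d a

/-- The factorization `H ≃ H_N ⊗ H_N̄` at the level of index types. -/
def splitEquiv (d : Fin n → Type*) (N : Finset (Fin n)) :
    (∀ a, d a) ≃ nbhdIdx d N × nbhdCoIdx d N :=
  Equiv.piEquivPiSubtypeProd (fun x => x ∈ N) d

variable (d)

/-- The operator `A ⊗ B` on `H = H_N ⊗ H_N̄`, viewed as an operator on `H`. -/
noncomputable def splitLift (N : Finset (Fin n))
    (A : Matrix (nbhdIdx d N) (nbhdIdx d N) ℂ)
    (B : Matrix (nbhdCoIdx d N) (nbhdCoIdx d N) ℂ) :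
    Matrix (∀ a, d a) (∀ a, d a) ℂ :=
  (Matrix.kroneckerMap (· * ·) A B).submatrix (splitEquiv d N) (splitEquiv d N)

/-- The neighborhood operator `A ⊗ I_N̄` on `H`. -/
noncomputable def nbhdLift (N : Finset (Fin n))
    (A : Matrix (nbhdIdx d N) (nbhdIdx d N) ℂ) : Matrix (∀ a, d a) (∀ a, d a) ℂ :=
  splitLift d N A 1

/-- The operator `I_N ⊗ B` on `H`. -/
noncomputable def coLift (N : Finset (Fin n))
    (B : Matrix (nbhdCoIdx d N) (nbhdCoIdx d N) ℂ) : Matrix (∀ a, d a) (∀ a, d a) ℂ :=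
  splitLift d N 1 B

/-- The reduced state `ρ_N = Tr_N̄(ρ)` on the neighborhood `N`. -/
noncomputable def nbhdPtrace (N : Finset (Fin n)) (ρ : Matrix (∀ a, d a) (∀ a, d a) ℂ) :
    Matrix (nbhdIdx d N) (nbhdIdx d N) ℂ :=
  Matrix.of fun i j => ∑ k : nbhdCoIdx d N,
    ρ ((splitEquiv d N).symm (i, k)) ((splitEquiv d N).symm (j, k))

/-- The operator Schmidt span of `ρ` on the neighborhood `N`:
`Σ_N(ρ) = {Tr_N̄[(I_N ⊗ B) ρ] : B}`. -/
noncomputable def nbhdSchmidt (N : Finset (Fin n)) (ρ : Matrix (∀ a, d a) (∀ a, d a) ℂ) :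
    Set (Matrix (nbhdIdx d N) (nbhdIdx d N) ℂ) :=
  {A | ∃ B : Matrix (nbhdCoIdx d N) (nbhdCoIdx d N) ℂ,
    A = nbhdPtrace d N (coLift d N B * ρ)}

/-- The extended minimal modular-invariant distorted algebra
`F_{ρ_N}(Σ_N(ρ)) ⊗ B(H_N̄)` as a subspace of `B(H)`. -/
noncomputable def extF (N : Finset (Fin n)) (ρ : Matrix (∀ a, d a) (∀ a, d a) ℂ) :
    Submodule ℂ (Matrix (∀ a, d a) (∀ a, d a) ℂ) :=
  Submodule.span ℂ {X | ∃ A ∈ Fdist (nbhdPtrace d N ρ) (nbhdSchmidt d N ρ),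
    ∃ B : Matrix (nbhdCoIdx d N) (nbhdCoIdx d N) ℂ, X = splitLift d N A B}

/-- A neighborhood QDS generator for `N`: a Lindblad generator whose Hamiltonian and
noise operators all act as `X_N ⊗ I_N̄`. -/
def IsNbhdGen (N : Finset (Fin n))
    (L : Matrix (∀ a, d a) (∀ a, d a) ℂ →ₗ[ℂ] Matrix (∀ a, d a) (∀ a, d a) ℂ) : Prop :=
  ∃ HN : Matrix (nbhdIdx d N) (nbhdIdx d N) ℂ, HN.IsHermitian ∧
    ∃ (m : ℕ) (Lk : Fin m → Matrix (nbhdIdx d N) (nbhdIdx d N) ℂ),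
      L = lindbladMap (nbhdLift d N HN) fun k => nbhdLift d N (Lk k)

/-- A purely dissipative neighborhood generator for `N` (zero Hamiltonian in some
Lindblad representation). -/
def IsDissipNbhdGen (N : Finset (Fin n))
    (L : Matrix (∀ a, d a) (∀ a, d a) ℂ →ₗ[ℂ] Matrix (∀ a, d a) (∀ a, d a) ℂ) : Prop :=
  ∃ (m : ℕ) (Lk : Fin m → Matrix (nbhdIdx d N) (nbhdIdx d N) ℂ),
    L = lindbladMap 0 fun k => nbhdLift d N (Lk k)

/-- The family of neighborhood generators `Lj` is frustration free: every invariant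
state of the sum is invariant for each component. -/
def IsFFFamily {M : ℕ}
    (Lj : Fin M → (Matrix (∀ a, d a) (∀ a, d a) ℂ →ₗ[ℂ] Matrix (∀ a, d a) (∀ a, d a) ℂ)) :
    Prop :=
  ∀ ρ : Matrix (∀ a, d a) (∀ a, d a) ℂ, IsDensity ρ → (∑ j, Lj j) ρ = 0 → ∀ j, Lj j ρ = 0

/-- `ρ` is frustration-free quasi-locally stabilizable relative to the neighborhood
structure `Nb`. -/
def IsFFQLS {M : ℕ} (Nb : Fin M → Finset (Fin n))
    (ρ : Matrix (∀ a, d a) (∀ a, d a) ℂ) : Prop :=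
  ∃ Lj : Fin M → (Matrix (∀ a, d a) (∀ a, d a) ℂ →ₗ[ℂ] Matrix (∀ a, d a) (∀ a, d a) ℂ),
    (∀ j, IsNbhdGen d (Nb j) (Lj j)) ∧ IsFFFamily d Lj ∧ IsGAS (∑ j, Lj j) ρ

/-- A pure state `|ψ⟩⟨ψ|` is dissipatively quasi-locally stabilizable relative to `Nb`:
it is GAS for a QL generator whose components have zero Hamiltonian and neighborhood
noise operators annihilating `ψ`. -/
def IsDQLS {M : ℕ} (Nb : Fin M → Finset (Fin n)) (ψ : (∀ a, d a) → ℂ) : Prop :=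
  ∃ Lj : Fin M → (Matrix (∀ a, d a) (∀ a, d a) ℂ →ₗ[ℂ] Matrix (∀ a, d a) (∀ a, d a) ℂ),
    (∀ j, ∃ (m : ℕ) (Dk : Fin m → Matrix (nbhdIdx d (Nb j)) (nbhdIdx d (Nb j)) ℂ),
      Lj j = lindbladMap 0 (fun k => nbhdLift d (Nb j) (Dk k)) ∧
      ∀ k, (nbhdLift d (Nb j) (Dk k)).mulVec ψ = 0) ∧
    IsGAS (∑ j, Lj j) (Matrix.vecMulVec ψ (star ψ))

/-- The (vector) Schmidt span of `ψ` relative to the neighborhood factor `H_N`. -/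
def vecSchmidt (N : Finset (Fin n)) (ψ : (∀ a, d a) → ℂ) : Set (nbhdIdx d N → ℂ) :=
  {w | ∃ b : nbhdCoIdx d N → ℂ,
    w = fun i => ∑ k, (starRingEnd ℂ) (b k) * ψ ((splitEquiv d N).symm (i, k))}

/-- `Σ_N(ψ) ⊗ H_N̄` as a subspace of `H`. -/
noncomputable def extVecSchmidt (N : Finset (Fin n)) (ψ : (∀ a, d a) → ℂ) :
    Submodule ℂ ((∀ a, d a) → ℂ) :=
  Submodule.span ℂ {v | ∃ w ∈ vecSchmidt d N ψ, ∃ b : nbhdCoIdx d N → ℂ,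
    v = fun x => w ((splitEquiv d N) x).1 * b ((splitEquiv d N) x).2}

end Multipartite

/-!
Frustration freeness makes every neighborhood component `L` fix `ρ`, so it is enough to show that
the extended distorted algebra of each neighborhood lies in `ker L`: the intersection of these
algebras then lies in the kernel of the sum, which global stability makes equal to `ℂ ρ`. The
converse inclusion is the operator Schmidt decomposition of `ρ`.

A component acts on its neighborhood by a Lindblad generator that annihilates the Schmidt span of
`ρ`, in particular the reduced state. If the reduced state `D` is faithful, the fixed points of the
dual generator form the commutant `𝒜` of the Hamiltonian, the noise operators and their adjoints,
because the dissipation function of a fixed point has zero expectation in `D`. As `𝒜 D` consists of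
fixed points of the generator itself, a dimension count shows that these are exactly `𝒜 D`, and
such a space is a modular-invariant distorted algebra relative to `D`. A reduced state that is not
faithful is first compressed to its support, which the generator leaves invariant.
-/

/-! ### Matrix lemmas -/

section Matrices

variable {ι κ : Type*}

open scoped Polynomial in
theorem map_eval_hadamard_mem {𝕜 : Type*} [CommSemiring 𝕜] {S : Submodule 𝕜 (Matrix ι κ 𝕜)}
    {c : Matrix ι κ 𝕜} (hc : ∀ Z ∈ S, c ⊙ Z ∈ S) (p : 𝕜[X]) {Z : Matrix ι κ 𝕜} (hZ : Z ∈ S) :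
    (c.map fun x => p.eval x) ⊙ Z ∈ S := by
  induction p using Polynomial.induction_on generalizing Z with
  | C a =>
    convert S.smul_mem a hZ using 1
    ext i j
    simp
  | add p q hp hq =>
    convert S.add_mem (hp hZ) (hq hZ) using 1
    ext i j
    simp [add_mul]
  | monomial n a ih =>
    convert hc _ (ih hZ) using 1
    ext i j
    simp only [hadamard_apply, map_apply, Polynomial.eval_mul, Polynomial.eval_C,
      Polynomial.eval_pow, Polynomial.eval_X]
    ring

/- On the finitely many entries of `c`, every function agrees with a polynomial. -/
theorem map_hadamard_mem {𝕜 : Type*} [Field 𝕜] [Finite ι] [Finite κ]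
    {S : Submodule 𝕜 (Matrix ι κ 𝕜)} {c : Matrix ι κ 𝕜} (hc : ∀ Z ∈ S, c ⊙ Z ∈ S) (f : 𝕜 → 𝕜)
    {Z : Matrix ι κ 𝕜} (hZ : Z ∈ S) : c.map f ⊙ Z ∈ S := by
  classical
  have hfin : (Set.range fun p : ι × κ => c p.1 p.2).Finite := Set.finite_range _
  let q := Lagrange.interpolate hfin.toFinset id f
  have hq : c.map f = c.map fun x => q.eval x := by
    ext i j
    exact (Lagrange.eval_interpolate_at_node f (Set.injOn_id _)
      (hfin.mem_toFinset.2 ⟨(i, j), rfl⟩)).symm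
  rw [hq]
  exact map_eval_hadamard_mem hc q hZ

variable [Fintype ι]

section PosSemidef

open scoped MatrixOrder Matrix.Norms.L2Operator

theorem exists_eq_conjTranspose_mul_self {A : Matrix ι ι ℂ} (hA : A.PosSemidef) :
    ∃ C : Matrix ι ι ℂ, A = Cᴴ * C := by
  classical exact CStarAlgebra.nonneg_iff_eq_star_mul_self.mp hA.nonneg

theorem exists_posSemidef_mul_self_eq {A : Matrix ι ι ℂ} (hA : A.PosSemidef) :
    ∃ B : Matrix ι ι ℂ, B.PosSemidef ∧ B * B = A := by
  classical
  exact ⟨CFC.sqrt A, nonneg_iff_posSemidef.1 (CFC.sqrt_nonneg A),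
    CFC.sqrt_mul_sqrt_self A hA.nonneg⟩

theorem eq_of_posSemidef_of_mul_self_eq {B C : Matrix ι ι ℂ} (hB : B.PosSemidef)
    (hC : C.PosSemidef) (h : B * B = C * C) : B = C := by
  classical
  rw [← CFC.sqrt_unique h hB.nonneg, CFC.sqrt_unique rfl hC.nonneg]

theorem span_posSemidef_eq_top {ι : Type*} [Finite ι] :
    Submodule.span ℂ {A : Matrix ι ι ℂ | A.PosSemidef} = ⊤ := by
  classical
  have := Fintype.ofFinite ι
  simpa only [nonneg_iff_posSemidef] using CStarAlgebra.span_nonneg (A := Matrix ι ι ℂ)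

end PosSemidef

theorem mul_eq_zero_of_trace_mul_mul_conjTranspose_eq_zero [Fintype κ] {ρ : Matrix ι ι ℂ}
    (hρ : ρ.PosSemidef) {C : Matrix κ ι ℂ} (h : (C * ρ * Cᴴ).trace = 0) : C * ρ = 0 := by
  obtain ⟨R, rfl⟩ := exists_eq_conjTranspose_mul_self hρ
  have hCR : (C * Rᴴ * (C * Rᴴ)ᴴ).trace = 0 := by
    rwa [conjTranspose_mul, conjTranspose_conjTranspose, Matrix.mul_assoc, ← Matrix.mul_assoc Rᴴ,
      ← Matrix.mul_assoc]
  rw [← Matrix.mul_assoc, trace_mul_conjTranspose_self_eq_zero_iff.1 hCR, Matrix.zero_mul]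

theorem mul_eq_zero_of_trace_sum_eq_zero [Fintype κ] {μ : Type*} [Fintype μ] {ρ : Matrix ι ι ℂ}
    (hρ : ρ.PosSemidef) {C : μ → Matrix κ ι ℂ} (h : (∑ k, C k * ρ * (C k)ᴴ).trace = 0) (k : μ) :
    C k * ρ = 0 := by
  rw [trace_sum, Finset.sum_eq_zero_iff_of_nonneg
    fun k _ => (hρ.mul_mul_conjTranspose_same (C k)).trace_nonneg] at h
  exact mul_eq_zero_of_trace_mul_mul_conjTranspose_eq_zero hρ (h k (Finset.mem_univ k))

theorem exists_isometry_mul_diagonal_mul [DecidableEq ι] {ρ : Matrix ι ι ℂ} (hρ : ρ.PosSemidef) :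
    ∃ (s : Finset ι) (V : Matrix ι s ℂ) (l : s → ℝ), (∀ i, 0 < l i) ∧ Vᴴ * V = 1 ∧
      ρ = V * diagonal (fun i => (l i : ℂ)) * Vᴴ := by
  let e := hρ.1.eigenvalues
  let U : Matrix ι ι ℂ := hρ.1.eigenvectorUnitary
  refine ⟨Finset.univ.filter fun i => e i ≠ 0, U.submatrix id Subtype.val, fun i => e i,
    fun i => ?_, ?_, ?_⟩
  · exact (hρ.eigenvalues_nonneg i).lt_of_ne' (Finset.mem_filter.1 i.2).2
  · have hU : Uᴴ * U = 1 := Unitary.coe_star_mul_self hρ.1.eigenvectorUnitary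
    rw [conjTranspose_submatrix, ← submatrix_mul _ _ _ _ _ Function.bijective_id, hU,
      submatrix_one _ Subtype.val_injective]
  · have hspec : ρ = U * diagonal (fun i => (e i : ℂ)) * Uᴴ := hρ.1.spectral_theorem
    ext i j
    simp only [hspec, mul_apply (M := _ * _), mul_diagonal, conjTranspose_apply, submatrix_apply,
      id_eq]
    rw [Finset.sum_coe_sort (Finset.univ.filter fun i => e i ≠ 0)
      fun k => U i k * (e k : ℂ) * star (U j k)]
    refine (Finset.sum_filter_of_ne (p := fun k => e k ≠ 0) fun k _ hk hek => hk ?_).symm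
    simp [hek]

end Matrices

/-! ### Pseudoinverses, square roots and isometries -/

section Isometry

variable {ι κ : Type*} [Fintype κ]

/-- Conjugation `Y ↦ V Y Vᴴ`; for an isometry `V` it embeds the operators on a subspace into those
on the whole space. -/
noncomputable def conjMap (V : Matrix ι κ ℂ) : Matrix κ κ ℂ →ₗ[ℂ] Matrix ι ι ℂ :=
  (mulRightLinearMap ι ℂ Vᴴ).comp (mulLeftLinearMap κ ℂ V)

theorem conjMap_apply (V : Matrix ι κ ℂ) (Y : Matrix κ κ ℂ) : conjMap V Y = V * Y * Vᴴ := rfl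

theorem conjMap_conjTranspose (V : Matrix ι κ ℂ) (Y : Matrix κ κ ℂ) :
    (conjMap V Y)ᴴ = conjMap V Yᴴ := by
  simp [conjMap_apply, Matrix.mul_assoc]

variable [Fintype ι]

theorem mpinv_eq {A B : Matrix ι ι ℂ} (hABA : A * B * A = A) (hBAB : B * A * B = B)
    (hAB : (A * B)ᴴ = A * B) (hBA : (B * A)ᴴ = B * A) : mpinv A = B := by
  have hex : ∃ B : Matrix ι ι ℂ,
      A * B * A = A ∧ B * A * B = B ∧ (A * B)ᴴ = A * B ∧ (B * A)ᴴ = B * A :=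
    ⟨B, hABA, hBAB, hAB, hBA⟩
  rw [mpinv, dif_pos hex]
  obtain ⟨hACA, hCAC, hAC, hCA⟩ := hex.choose_spec
  set C := hex.choose
  have hleft : A * B = A * C := by
    calc A * B = ((A * C) * (A * B))ᴴ := by rw [← Matrix.mul_assoc, hACA, hAB]
      _ = A * C := by rw [conjTranspose_mul, hAB, hAC, ← Matrix.mul_assoc, hABA]
  have hright : B * A = C * A := by
    calc B * A = ((B * A) * (C * A))ᴴ := by
          rw [Matrix.mul_assoc, ← Matrix.mul_assoc A, hACA, hBA]
      _ = C * A := by rw [conjTranspose_mul, hBA, hCA, Matrix.mul_assoc, ← Matrix.mul_assoc A, hABA]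
  calc C = C * A * C := hCAC.symm
    _ = B * (A * C) := by rw [← hright, Matrix.mul_assoc]
    _ = B := by rw [← hleft, ← Matrix.mul_assoc, hBAB]

theorem msqrt_eq {A B : Matrix ι ι ℂ} (hB : B.PosSemidef) (h : B * B = A) : msqrt A = B := by
  have hex : ∃ B : Matrix ι ι ℂ, B.PosSemidef ∧ B * B = A := ⟨B, hB, h⟩
  rw [msqrt, dif_pos hex]
  exact eq_of_posSemidef_of_mul_self_eq hex.choose_spec.1 hB (hex.choose_spec.2.trans h.symm)

theorem msqrt_diagonal [DecidableEq ι] {l : ι → ℝ} (hl : ∀ i, 0 ≤ l i) :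
    msqrt (diagonal fun i => (l i : ℂ)) = diagonal fun i => (√(l i) : ℂ) := by
  refine msqrt_eq (PosSemidef.diagonal fun i => by simp [Real.sqrt_nonneg]) ?_
  rw [diagonal_mul_diagonal]
  congr with i
  exact_mod_cast Real.mul_self_sqrt (hl i)

theorem msqrt_posSemidef {A : Matrix ι ι ℂ} (hA : A.PosSemidef) : (msqrt A).PosSemidef := by
  obtain ⟨B, hB, hBA⟩ := exists_posSemidef_mul_self_eq hA
  rwa [msqrt_eq hB hBA]

theorem msqrt_mul_self {A : Matrix ι ι ℂ} (hA : A.PosSemidef) : msqrt A * msqrt A = A := by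
  obtain ⟨B, hB, hBA⟩ := exists_posSemidef_mul_self_eq hA
  rwa [msqrt_eq hB hBA]

variable [DecidableEq κ] {V : Matrix ι κ ℂ}

theorem conjMap_mul (hV : Vᴴ * V = 1) (Y Z : Matrix κ κ ℂ) :
    conjMap V (Y * Z) = conjMap V Y * conjMap V Z := by
  have hVV (X : Matrix κ ι ℂ) : Vᴴ * (V * X) = X := by rw [← Matrix.mul_assoc, hV, Matrix.one_mul]
  simp only [conjMap_apply, Matrix.mul_assoc, hVV]

theorem conjMap_conjTranspose_conjMap (hV : Vᴴ * V = 1) (Y : Matrix κ κ ℂ) :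
    conjMap Vᴴ (conjMap V Y) = Y := by
  simp only [conjMap_apply, conjTranspose_conjTranspose, Matrix.mul_assoc, hV, Matrix.mul_one]
  rw [← Matrix.mul_assoc, hV, Matrix.one_mul]

theorem conjMap_injective (hV : Vᴴ * V = 1) : Function.Injective (conjMap V) :=
  Function.LeftInverse.injective (conjMap_conjTranspose_conjMap hV)

theorem mpinv_conjMap (hV : Vᴴ * V = 1) {A : Matrix κ κ ℂ} (hA : IsUnit A) :
    mpinv (conjMap V A) = conjMap V A⁻¹ := by
  have hdet := (isUnit_iff_isUnit_det A).1 hA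
  apply mpinv_eq <;>
    simp only [← conjMap_mul hV, conjMap_conjTranspose, mul_nonsing_inv A hdet,
      nonsing_inv_mul A hdet, Matrix.one_mul, conjTranspose_one]

theorem mpinv_eq_inv {A : Matrix κ κ ℂ} (hA : IsUnit A) : mpinv A = A⁻¹ := by
  simpa [conjMap_apply] using mpinv_conjMap (V := (1 : Matrix κ κ ℂ)) (by simp) hA

theorem msqrt_conjMap (hV : Vᴴ * V = 1) {A : Matrix κ κ ℂ} (hA : A.PosSemidef) :
    msqrt (conjMap V A) = conjMap V (msqrt A) :=
  msqrt_eq ((msqrt_posSemidef hA).mul_mul_conjTranspose_same V)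
    (by rw [← conjMap_mul hV, msqrt_mul_self hA])

end Isometry

/-! ### Distorted algebras -/

section DistortedAlgebra

variable {ι κ : Type*} [Fintype ι] [Fintype κ]

/-- A modular-invariant distorted algebra relative to `ρ`: the closure properties by which
`Fdist ρ W` is the least such subspace containing `W`. -/
structure IsDistortedAlgebra (ρ : Matrix ι ι ℂ) (S : Submodule ℂ (Matrix ι ι ℂ)) : Prop where
  conjTranspose_mem : ∀ X ∈ S, Xᴴ ∈ S
  mul_mpinv_mul_mem : ∀ X ∈ S, ∀ Y ∈ S, X * mpinv ρ * Y ∈ S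
  modular_mem : ∀ X ∈ S, msqrt ρ * X * mpinv (msqrt ρ) ∈ S

theorem IsDistortedAlgebra.Fdist_le {ρ : Matrix ι ι ℂ} {S : Submodule ℂ (Matrix ι ι ℂ)}
    (hS : IsDistortedAlgebra ρ S) {W : Set (Matrix ι ι ℂ)} (hW : W ⊆ S) : Fdist ρ W ≤ S :=
  sInf_le ⟨hW, hS.1, hS.2, hS.3⟩

theorem IsDistortedAlgebra.map_conjMap [DecidableEq κ] {V : Matrix ι κ ℂ} (hV : Vᴴ * V = 1)
    {D : Matrix κ κ ℂ} (hD : D.PosDef) {S : Submodule ℂ (Matrix κ κ ℂ)}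
    (hS : IsDistortedAlgebra D S) : IsDistortedAlgebra (conjMap V D) (S.map (conjMap V)) := by
  have hsqrt : IsUnit (msqrt D) := by
    refine isUnit_of_mul_isUnit_left (y := msqrt D) ?_
    rw [msqrt_mul_self hD.posSemidef]
    exact hD.isUnit
  refine ⟨?_, ?_, ?_⟩
  · rintro _ ⟨Y, hY, rfl⟩
    rw [conjMap_conjTranspose]
    exact Submodule.mem_map_of_mem (hS.conjTranspose_mem Y hY)
  · rintro _ ⟨Y, hY, rfl⟩ _ ⟨Z, hZ, rfl⟩
    rw [mpinv_conjMap hV hD.isUnit, ← conjMap_mul hV, ← conjMap_mul hV, ← mpinv_eq_inv hD.isUnit]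
    exact Submodule.mem_map_of_mem (hS.mul_mpinv_mul_mem Y hY Z hZ)
  · rintro _ ⟨Y, hY, rfl⟩
    rw [msqrt_conjMap hV hD.posSemidef, mpinv_conjMap hV hsqrt, ← conjMap_mul hV,
      ← conjMap_mul hV, ← mpinv_eq_inv hsqrt]
    exact Submodule.mem_map_of_mem (hS.modular_mem Y hY)

theorem diagonal_mul_mul_inv_diagonal {𝕜 : Type*} [Field 𝕜] [DecidableEq ι] {l : ι → 𝕜}
    (hl : ∀ i, l i ≠ 0) (Z : Matrix ι ι 𝕜) :
    diagonal l * Z * (diagonal l)⁻¹ = (of fun i j => l i / l j) ⊙ Z := by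
  have hinv : (diagonal l)⁻¹ = diagonal fun i => (l i)⁻¹ := by
    refine inv_eq_right_inv ?_
    simp [diagonal_mul_diagonal, hl]
  ext i j
  rw [hinv, mul_diagonal, diagonal_mul, hadamard_apply, of_apply]
  ring

/- The modular map multiplies the entry `(i, j)` by `√(lᵢ / lⱼ)`, a function of the factor `lᵢ / lⱼ`
by which `Z ↦ D Z D⁻¹` multiplies it. -/
theorem isDistortedAlgebra_diagonal [DecidableEq ι] {l : ι → ℝ} (hl : ∀ i, 0 < l i)
    {S : Submodule ℂ (Matrix ι ι ℂ)} (hstar : ∀ X ∈ S, Xᴴ ∈ S)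
    (hmul : ∀ X ∈ S, ∀ Y ∈ S, X * (diagonal fun i => (l i : ℂ))⁻¹ * Y ∈ S)
    (hconj : ∀ X ∈ S,
      (diagonal fun i => (l i : ℂ)) * X * (diagonal fun i => (l i : ℂ))⁻¹ ∈ S) :
    IsDistortedAlgebra (diagonal fun i => (l i : ℂ)) S := by
  have hl₀ : ∀ i, (l i : ℂ) ≠ 0 := fun i => by exact_mod_cast (hl i).ne'
  have hsqrt₀ : ∀ i, (√(l i) : ℂ) ≠ 0 := fun i => by exact_mod_cast (Real.sqrt_pos.2 (hl i)).ne'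
  refine ⟨hstar, fun X hX Y hY => ?_, fun X hX => ?_⟩
  · rw [mpinv_eq_inv (isUnit_diagonal.2 (Pi.isUnit_iff.2 fun i => (hl₀ i).isUnit))]
    exact hmul X hX Y hY
  · rw [msqrt_diagonal fun i => (hl i).le,
      mpinv_eq_inv (isUnit_diagonal.2 (Pi.isUnit_iff.2 fun i => (hsqrt₀ i).isUnit)),
      diagonal_mul_mul_inv_diagonal hsqrt₀]
    have hfun : (of fun i j => (√(l i) / √(l j) : ℂ)) =
        (of fun i j => (l i / l j : ℂ)).map fun z => (√z.re : ℂ) := by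
      ext i j
      simp only [of_apply, map_apply, ← Complex.ofReal_div, Complex.ofReal_re,
        Real.sqrt_div (hl i).le]
    rw [hfun]
    refine map_hadamard_mem (fun Z hZ => ?_) _ hX
    rw [← diagonal_mul_mul_inv_diagonal hl₀]
    exact hconj Z hZ

end DistortedAlgebra

/-! ### Lindblad generators in effective-Hamiltonian form -/

section KrausGen

variable {ι κ μ : Type*} [Fintype ι] [Fintype κ] [Fintype μ]

/-- The generator `X ↦ K X + X Kᴴ + ∑ₖ Lₖ X Lₖᴴ`, with the Hamiltonian and the anticommutator terms
of a Lindblad generator merged into `K`. It is trace preserving when `K + Kᴴ + ∑ₖ Lₖᴴ Lₖ = 0`. -/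
noncomputable def krausGen (K : Matrix ι ι ℂ) (L : μ → Matrix ι ι ℂ) :
    Matrix ι ι ℂ →ₗ[ℂ] Matrix ι ι ℂ :=
  LinearMap.mulLeft ℂ K + LinearMap.mulRight ℂ Kᴴ +
    ∑ k, (LinearMap.mulRight ℂ (L k)ᴴ).comp (LinearMap.mulLeft ℂ (L k))

theorem krausGen_apply (K : Matrix ι ι ℂ) (L : μ → Matrix ι ι ℂ) (X : Matrix ι ι ℂ) :
    krausGen K L X = K * X + X * Kᴴ + ∑ k, L k * X * (L k)ᴴ := by
  simp [krausGen, LinearMap.sum_apply]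

theorem krausGen_conjTranspose (K : Matrix ι ι ℂ) (L : μ → Matrix ι ι ℂ) (X : Matrix ι ι ℂ) :
    krausGen K L Xᴴ = (krausGen K L X)ᴴ := by
  simp only [krausGen_apply, conjTranspose_add, conjTranspose_mul, conjTranspose_sum,
    conjTranspose_conjTranspose, Matrix.mul_assoc, add_comm (K * Xᴴ)]

theorem conjTranspose_mem_ker_krausGen {K : Matrix ι ι ℂ} {L : μ → Matrix ι ι ℂ}
    {X : Matrix ι ι ℂ} (hX : X ∈ LinearMap.ker (krausGen K L)) :
    Xᴴ ∈ LinearMap.ker (krausGen K L) := by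
  rw [LinearMap.mem_ker] at hX ⊢
  rw [krausGen_conjTranspose, hX, conjTranspose_zero]

/-- The effective Hamiltonian `-i H - ½ ∑ₖ Lₖᴴ Lₖ`. -/
noncomputable def effHam (H : Matrix ι ι ℂ) (L : μ → Matrix ι ι ℂ) : Matrix ι ι ℂ :=
  (-Complex.I) • H - ((1 : ℂ) / 2) • ∑ k, (L k)ᴴ * L k

theorem effHam_conjTranspose {H : Matrix ι ι ℂ} (hH : H.IsHermitian) (L : μ → Matrix ι ι ℂ) :
    (effHam H L)ᴴ = Complex.I • H - ((1 : ℂ) / 2) • ∑ k, (L k)ᴴ * L k := by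
  simp [effHam, conjTranspose_sum, hH.eq, conjTranspose_smul]

theorem effHam_add_conjTranspose_add_sum {H : Matrix ι ι ℂ} (hH : H.IsHermitian)
    (L : μ → Matrix ι ι ℂ) : effHam H L + (effHam H L)ᴴ + ∑ k, (L k)ᴴ * L k = 0 := by
  rw [effHam_conjTranspose hH, effHam]
  module

theorem lindbladMap_eq_krausGen [DecidableEq ι] {H : Matrix ι ι ℂ} (hH : H.IsHermitian) {m : ℕ}
    (L : Fin m → Matrix ι ι ℂ) : lindbladMap H L = krausGen (effHam H L) L := by
  ext1 X
  rw [krausGen_apply, effHam_conjTranspose hH, effHam]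
  simp only [lindbladMap, LinearMap.add_apply, LinearMap.smul_apply, LinearMap.sub_apply,
    LinearMap.sum_apply, LinearMap.comp_apply, LinearMap.mulLeft_apply, LinearMap.mulRight_apply,
    sub_mul, mul_sub, smul_mul_assoc, mul_smul_comm, Finset.sum_sub_distrib, ← Finset.smul_sum,
    Finset.sum_add_distrib, ← Finset.sum_mul, ← Finset.mul_sum]
  module

/-- `T` intertwines left multiplication by `A` with left multiplication by `A'`, and right
multiplication by `Aᴴ` with right multiplication by `A'ᴴ`. Linear maps with this property for the
operators of two generators intertwine the generators. -/
structure Intertwines (T : Matrix ι ι ℂ →ₗ[ℂ] Matrix κ κ ℂ) (A : Matrix ι ι ℂ)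
    (A' : Matrix κ κ ℂ) : Prop where
  map_mul : ∀ X, T (A * X) = A' * T X
  map_mul_conjTranspose : ∀ X, T (X * Aᴴ) = T X * A'ᴴ

theorem map_krausGen {T : Matrix ι ι ℂ →ₗ[ℂ] Matrix κ κ ℂ} {K : Matrix ι ι ℂ}
    {L : μ → Matrix ι ι ℂ} {K' : Matrix κ κ ℂ} {L' : μ → Matrix κ κ ℂ}
    (hK : Intertwines T K K') (hL : ∀ k, Intertwines T (L k) (L' k)) (X : Matrix ι ι ℂ) :
    T (krausGen K L X) = krausGen K' L' (T X) := by
  simp only [krausGen_apply, map_add, map_sum, hK.map_mul, hK.map_mul_conjTranspose,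
    (hL _).map_mul, (hL _).map_mul_conjTranspose]

theorem intertwines_conjMap {V : Matrix ι κ ℂ} {A : Matrix ι ι ℂ} {A' : Matrix κ κ ℂ}
    (h : A * V = V * A') : Intertwines (conjMap V) A' A where
  map_mul X := by simp only [conjMap_apply, ← Matrix.mul_assoc, h]
  map_mul_conjTranspose X := by
    simp only [conjMap_apply, Matrix.mul_assoc, ← conjTranspose_mul, h]

end KrausGen

/-! ### Fixed points of a generator with a faithful invariant state -/

section Duality

variable {ι μ : Type*} [Fintype ι] [Fintype μ]

theorem isHSAdjoint_krausGen (K : Matrix ι ι ℂ) (L : μ → Matrix ι ι ℂ) :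
    IsHSAdjoint (krausGen K L) (krausGen Kᴴ fun k => (L k)ᴴ) := by
  intro X Y
  classical
  have hcycle (A B : Matrix ι ι ℂ) : (A * Xᴴ * B * Y).trace = (Xᴴ * (B * Y * A)).trace := by
    rw [Matrix.mul_assoc, Matrix.mul_assoc, trace_mul_comm, Matrix.mul_assoc, Matrix.mul_assoc]
  have hleft := hcycle Kᴴ 1
  have hright := hcycle 1 K
  simp only [Matrix.mul_one, Matrix.one_mul] at hleft hright
  rw [← krausGen_conjTranspose]
  simp only [krausGen_apply, conjTranspose_conjTranspose, Matrix.add_mul, Matrix.mul_add,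
    Matrix.sum_mul, Matrix.mul_sum, trace_add, trace_sum, hcycle, hleft, hright]
  rw [add_comm (Xᴴ * (Y * Kᴴ)).trace]

theorem IsHSAdjoint.finrank_ker_eq {L Ld : Matrix ι ι ℂ →ₗ[ℂ] Matrix ι ι ℂ}
    (h : IsHSAdjoint L Ld) :
    Module.finrank ℂ (LinearMap.ker Ld) = Module.finrank ℂ (LinearMap.ker L) := by
  classical
  let := toMatrixNormedAddCommGroup (1 : Matrix ι ι ℂ) PosDef.one
  let := toMatrixInnerProductSpace (1 : Matrix ι ι ℂ) PosSemidef.one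
  have hadj : Ld = LinearMap.adjoint L := by
    rw [LinearMap.eq_adjoint_iff]
    intro X Y
    have hinner (A B : Matrix ι ι ℂ) : inner ℂ A B = (Aᴴ * B).trace := by
      rw [trace_mul_comm]
      exact congrArg (fun C => (C * Aᴴ).trace) (Matrix.mul_one B)
    rw [hinner, hinner, h]
  have hrank := LinearMap.finrank_range_adjoint L
  rw [← hadj] at hrank
  have hL := LinearMap.finrank_range_add_finrank_ker L
  have hLd := LinearMap.finrank_range_add_finrank_ker Ld
  omega

variable {K D X : Matrix ι ι ℂ} {L : μ → Matrix ι ι ℂ}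

/- The two sides are Lindblad's dissipation function, whose trace against an invariant state
vanishes. -/
theorem sum_commutator_conjTranspose_mul_commutator (hTP : K + Kᴴ + ∑ k, (L k)ᴴ * L k = 0)
    (hX : krausGen Kᴴ (fun k => (L k)ᴴ) X = 0) :
    ∑ k, (L k * X - X * L k)ᴴ * (L k * X - X * L k) =
      krausGen Kᴴ (fun k => (L k)ᴴ) (Xᴴ * X) := by
  have hX' : krausGen Kᴴ (fun k => (L k)ᴴ) Xᴴ = 0 := by
    rw [krausGen_conjTranspose, hX, conjTranspose_zero]
  simp only [krausGen_apply, conjTranspose_conjTranspose] at hX hX' ⊢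
  have hexpand : ∑ k, (L k * X - X * L k)ᴴ * (L k * X - X * L k) =
      Xᴴ * (∑ k, (L k)ᴴ * L k) * X - Xᴴ * (∑ k, (L k)ᴴ * X * L k)
        - (∑ k, (L k)ᴴ * Xᴴ * L k) * X + ∑ k, (L k)ᴴ * (Xᴴ * X) * L k := by
    simp only [Finset.mul_sum, Finset.sum_mul, ← Finset.sum_sub_distrib, ← Finset.sum_add_distrib]
    refine Finset.sum_congr rfl fun k _ => ?_
    simp only [conjTranspose_sub, conjTranspose_mul]
    noncomm_ring
  rw [hexpand, eq_neg_of_add_eq_zero_right hTP, eq_neg_of_add_eq_zero_right hX,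
    eq_neg_of_add_eq_zero_right hX']
  noncomm_ring

theorem commute_of_krausGen_dual_eq_zero (hTP : K + Kᴴ + ∑ k, (L k)ᴴ * L k = 0) (hD : D.PosDef)
    (hinv : krausGen K L D = 0) (hX : krausGen Kᴴ (fun k => (L k)ᴴ) X = 0) :
    K * X = X * K ∧ ∀ k, L k * X = X * L k := by
  classical
  have htrace : (∑ k, (L k * X - X * L k) * D * (L k * X - X * L k)ᴴ).trace = 0 := by
    calc (∑ k, (L k * X - X * L k) * D * (L k * X - X * L k)ᴴ).trace
        = ((∑ k, (L k * X - X * L k)ᴴ * (L k * X - X * L k)) * D).trace := by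
          simp only [trace_sum, Matrix.sum_mul]
          exact Finset.sum_congr rfl fun k _ => by rw [trace_mul_comm, Matrix.mul_assoc]
      _ = ((krausGen Kᴴ (fun k => (L k)ᴴ) (Xᴴ * X))ᴴ * D).trace := by
          rw [sum_commutator_conjTranspose_mul_commutator hTP hX, ← krausGen_conjTranspose,
            conjTranspose_mul, conjTranspose_conjTranspose]
      _ = 0 := by rw [isHSAdjoint_krausGen K L, hinv, Matrix.mul_zero, trace_zero]
  have hL (k : μ) : L k * X = X * L k := sub_eq_zero.1 <| hD.isUnit.mul_left_eq_zero.1 <|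
    mul_eq_zero_of_trace_sum_eq_zero hD.posSemidef htrace k
  refine ⟨?_, hL⟩
  simp only [krausGen_apply, conjTranspose_conjTranspose, Matrix.mul_assoc, ← hL] at hX
  simp only [← Matrix.mul_assoc, ← Matrix.sum_mul, eq_neg_of_add_eq_zero_right hTP] at hX
  rw [eq_comm, ← sub_eq_zero, ← hX]
  noncomm_ring

end Duality

section Commutant

variable {ι μ : Type*} [Fintype ι] [DecidableEq ι]

/-- The star-algebra of operators commuting with `K`, the `Lₖ` and their adjoints. -/
noncomputable def krausCommutant (K : Matrix ι ι ℂ) (L : μ → Matrix ι ι ℂ) :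
    StarSubalgebra ℂ (Matrix ι ι ℂ) :=
  StarSubalgebra.centralizer ℂ (insert K (Set.range L))

variable {K D X : Matrix ι ι ℂ} {L : μ → Matrix ι ι ℂ}

theorem mem_krausCommutant_iff : X ∈ krausCommutant K L ↔
    (K * X = X * K ∧ Kᴴ * X = X * Kᴴ) ∧ ∀ k, L k * X = X * L k ∧ (L k)ᴴ * X = X * (L k)ᴴ := by
  simp [krausCommutant, StarSubalgebra.mem_centralizer_iff, star_eq_conjTranspose]

variable [Fintype μ]

theorem krausGen_mul_left (hX : X ∈ krausCommutant K L) (Y : Matrix ι ι ℂ) :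
    krausGen K L (X * Y) = X * krausGen K L Y := by
  obtain ⟨hK, hL⟩ := mem_krausCommutant_iff.1 hX
  have hT {A : Matrix ι ι ℂ} (hA : A * X = X * A) : Intertwines (LinearMap.mulLeft ℂ X) A A :=
    ⟨fun Y => by simp [← Matrix.mul_assoc, hA], fun Y => by simp [Matrix.mul_assoc]⟩
  exact (map_krausGen (hT hK.1) (fun k => hT (hL k).1) Y).symm

theorem krausGen_mul_right (hX : X ∈ krausCommutant K L) (Y : Matrix ι ι ℂ) :
    krausGen K L (Y * X) = krausGen K L Y * X := by
  obtain ⟨hK, hL⟩ := mem_krausCommutant_iff.1 hX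
  have hT {A : Matrix ι ι ℂ} (hA : Aᴴ * X = X * Aᴴ) : Intertwines (LinearMap.mulRight ℂ X) A A :=
    ⟨fun Y => by simp [Matrix.mul_assoc], fun Y => by simp [Matrix.mul_assoc, hA]⟩
  exact (map_krausGen (hT hK.2) (fun k => hT (hL k).2) Y).symm

theorem ker_krausGen_dual_le (hTP : K + Kᴴ + ∑ k, (L k)ᴴ * L k = 0) (hD : D.PosDef)
    (hinv : krausGen K L D = 0) :
    LinearMap.ker (krausGen Kᴴ fun k => (L k)ᴴ) ≤ (krausCommutant K L).toSubmodule := by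
  intro X hX
  obtain ⟨hK, hL⟩ := commute_of_krausGen_dual_eq_zero hTP hD hinv hX
  obtain ⟨hK', hL'⟩ :=
    commute_of_krausGen_dual_eq_zero hTP hD hinv (conjTranspose_mem_ker_krausGen hX)
  have hadj {A : Matrix ι ι ℂ} (hA : A * Xᴴ = Xᴴ * A) : Aᴴ * X = X * Aᴴ := by
    simpa only [conjTranspose_mul, conjTranspose_conjTranspose] using
      congrArg conjTranspose hA.symm
  exact mem_krausCommutant_iff.2 ⟨⟨hK, hadj hK'⟩, fun k => ⟨hL k, hadj (hL' k)⟩⟩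

theorem ker_krausGen_eq_map_mulRight (hTP : K + Kᴴ + ∑ k, (L k)ᴴ * L k = 0) (hD : D.PosDef)
    (hinv : krausGen K L D = 0) : LinearMap.ker (krausGen K L) =
      (krausCommutant K L).toSubmodule.map (LinearMap.mulRight ℂ D) := by
  have hinj : Function.Injective (LinearMap.mulRight ℂ D) := hD.isUnit.mul_left_injective
  have hle : (krausCommutant K L).toSubmodule.map (LinearMap.mulRight ℂ D) ≤
      LinearMap.ker (krausGen K L) := by
    rintro _ ⟨X, hX, rfl⟩
    rw [LinearMap.mem_ker, LinearMap.mulRight_apply, krausGen_mul_left hX, hinv, Matrix.mul_zero]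
  refine (Submodule.eq_of_le_of_finrank_le hle ?_).symm
  rw [← (isHSAdjoint_krausGen K L).finrank_ker_eq,
    ← (Submodule.equivMapOfInjective _ hinj (krausCommutant K L).toSubmodule).finrank_eq]
  exact Submodule.finrank_mono (ker_krausGen_dual_le hTP hD hinv)

theorem isDistortedAlgebra_ker_krausGen_diagonal (hTP : K + Kᴴ + ∑ k, (L k)ᴴ * L k = 0)
    {l : ι → ℝ} (hl : ∀ i, 0 < l i) (hinv : krausGen K L (diagonal fun i => (l i : ℂ)) = 0) :
    IsDistortedAlgebra (diagonal fun i => (l i : ℂ)) (LinearMap.ker (krausGen K L)) := by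
  have hD : (diagonal fun i => (l i : ℂ)).PosDef :=
    PosDef.diagonal fun i => by exact_mod_cast hl i
  set D := diagonal fun i => (l i : ℂ) with hDdef
  have hdet := (isUnit_iff_isUnit_det D).1 hD.isUnit
  have hker := ker_krausGen_eq_map_mulRight hTP hD hinv
  refine isDistortedAlgebra_diagonal hl (fun X hX => conjTranspose_mem_ker_krausGen hX) ?_ ?_
  · intro _ hX Y hY
    rw [hker] at hX
    obtain ⟨A, hA, rfl⟩ := hX
    rw [← hDdef, LinearMap.mulRight_apply, mul_nonsing_inv_cancel_right _ _ hdet,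
      LinearMap.mem_ker, krausGen_mul_left hA, hY, Matrix.mul_zero]
  · intro _ hX
    rw [hker] at hX
    obtain ⟨A, hA, rfl⟩ := hX
    rw [← hDdef, LinearMap.mulRight_apply, ← Matrix.mul_assoc,
      mul_nonsing_inv_cancel_right _ _ hdet, LinearMap.mem_ker, krausGen_mul_right hA, hinv,
      Matrix.zero_mul]

end Commutant

/-! ### Reduction to the support of the invariant state -/

section Support

variable {ι κ μ : Type*} [Fintype ι] [Fintype κ] [Fintype μ] {K : Matrix ι ι ℂ}
  {L : μ → Matrix ι ι ℂ} {V : Matrix ι κ ℂ}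

theorem mul_mul_eq_zero_of_krausGen_eq_zero {ρ : Matrix ι ι ℂ} (hρ : ρ.PosSemidef)
    (hinv : krausGen K L ρ = 0) {Q : Matrix ι ι ℂ} (hQ : Q * ρ = 0) :
    Q * K * ρ = 0 ∧ ∀ k, Q * L k * ρ = 0 := by
  have hQ' : ρ * Qᴴ = 0 := by
    rw [← hρ.1.eq, ← conjTranspose_mul, hQ, conjTranspose_zero]
  have hexpand : Q * krausGen K L ρ = Q * K * ρ + ∑ k, Q * L k * ρ * (L k)ᴴ := by
    simp only [krausGen_apply, Matrix.mul_add, Matrix.mul_sum, ← Matrix.mul_assoc, hQ,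
      Matrix.zero_mul, add_zero]
  rw [hinv, Matrix.mul_zero] at hexpand
  have hjump (k : μ) : Q * L k * ρ = 0 := by
    refine mul_eq_zero_of_trace_sum_eq_zero hρ (C := fun k => Q * L k) ?_ k
    have hcorner := congrArg (· * Qᴴ) hexpand
    simp only [Matrix.zero_mul, Matrix.add_mul, Matrix.mul_assoc _ ρ, hQ', Matrix.mul_zero,
      zero_add, Matrix.sum_mul] at hcorner
    simp only [conjTranspose_mul, Matrix.mul_assoc _ ρ, ← Matrix.mul_assoc ρ] at hcorner ⊢
    simp only [Matrix.mul_assoc] at hcorner ⊢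
    rw [← hcorner, trace_zero]
  refine ⟨?_, hjump⟩
  simpa only [hjump, Matrix.zero_mul, Finset.sum_const_zero, add_zero] using hexpand.symm

theorem conjMap_add_conjTranspose_add_sum (hTP : K + Kᴴ + ∑ k, (L k)ᴴ * L k = 0)
    (hL : ∀ k, L k * V = V * conjMap Vᴴ (L k)) :
    conjMap Vᴴ K + (conjMap Vᴴ K)ᴴ + ∑ k, (conjMap Vᴴ (L k))ᴴ * conjMap Vᴴ (L k) = 0 := by
  have hjump (k : μ) :
      (conjMap Vᴴ (L k))ᴴ * conjMap Vᴴ (L k) = conjMap Vᴴ ((L k)ᴴ * L k) := by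
    rw [conjMap_conjTranspose, conjMap_apply Vᴴ (L k)ᴴ, conjTranspose_conjTranspose,
      Matrix.mul_assoc, ← hL, conjMap_apply, conjTranspose_conjTranspose]
    simp only [Matrix.mul_assoc]
  rw [Finset.sum_congr rfl fun k _ => hjump k, conjMap_conjTranspose, ← map_sum, ← map_add,
    ← map_add, hTP, map_zero]

variable [DecidableEq κ] {D : Matrix κ κ ℂ}

theorem mul_isometry_eq_of_krausGen_conjMap_eq_zero (hV : Vᴴ * V = 1) (hD : D.PosDef)
    (hinv : krausGen K L (conjMap V D) = 0) :
    K * V = V * conjMap Vᴴ K ∧ ∀ k, L k * V = V * conjMap Vᴴ (L k) := by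
  classical
  have hQ : (1 - V * Vᴴ) * conjMap V D = 0 := by
    simp only [conjMap_apply, Matrix.sub_mul, Matrix.one_mul, Matrix.mul_assoc]
    rw [← Matrix.mul_assoc Vᴴ, hV, Matrix.one_mul, sub_self]
  have hrange {A : Matrix ι ι ℂ} (hA : (1 - V * Vᴴ) * A * conjMap V D = 0) :
      A * V = V * conjMap Vᴴ A := by
    have hAV : (1 - V * Vᴴ) * A * V * D = 0 := by
      have hmul := congrArg (· * V) hA
      simpa only [conjMap_apply, Matrix.mul_assoc, hV, Matrix.mul_one, Matrix.zero_mul] using hmul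
    have hAV' : (1 - V * Vᴴ) * A * V = 0 := by
      rw [← mul_nonsing_inv_cancel_right D ((1 - V * Vᴴ) * A * V)
        ((isUnit_iff_isUnit_det D).1 hD.isUnit), hAV, Matrix.zero_mul]
    rw [conjMap_apply, conjTranspose_conjTranspose, ← sub_eq_zero, ← hAV']
    simp only [Matrix.sub_mul, Matrix.one_mul, Matrix.mul_assoc]
  obtain ⟨hK, hL⟩ := mul_mul_eq_zero_of_krausGen_eq_zero
    (hD.posSemidef.mul_mul_conjTranspose_same V) hinv hQ
  exact ⟨hrange hK, fun k => hrange (hL k)⟩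

/-- The row and column spaces of `A` are contained in the support of the Hermitian operator `ρ`,
stated as: whatever annihilates `ρ` annihilates `A` from both sides. -/
def SupportedOn (A ρ : Matrix ι ι ℂ) : Prop :=
  ∀ Q : Matrix ι ι ℂ, ρ * Q = 0 → A * Q = 0 ∧ Qᴴ * A = 0

theorem SupportedOn.conjMap_conjMap_conjTranspose (hV : Vᴴ * V = 1) {A : Matrix ι ι ℂ}
    (hA : SupportedOn A (conjMap V D)) : conjMap V (conjMap Vᴴ A) = A := by
  classical
  have hQ : conjMap V D * (1 - V * Vᴴ) = 0 := by
    simp only [conjMap_apply, Matrix.mul_sub, Matrix.mul_one, Matrix.mul_assoc]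
    rw [← Matrix.mul_assoc Vᴴ, hV, Matrix.one_mul, sub_self]
  obtain ⟨hright, hleft⟩ := hA _ hQ
  simp only [conjTranspose_sub, conjTranspose_one, conjTranspose_mul, conjTranspose_conjTranspose,
    Matrix.sub_mul, Matrix.mul_sub, Matrix.one_mul, Matrix.mul_one, sub_eq_zero]
    at hright hleft
  calc conjMap V (conjMap Vᴴ A) = V * Vᴴ * (A * (V * Vᴴ)) := by
        simp only [conjMap_apply, conjTranspose_conjTranspose, Matrix.mul_assoc]
    _ = A := by rw [← hright, ← hleft]

theorem Fdist_le_ker_krausGen {ρ : Matrix ι ι ℂ} (hρ : ρ.PosSemidef)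
    (hTP : K + Kᴴ + ∑ k, (L k)ᴴ * L k = 0) (hinv : krausGen K L ρ = 0)
    {W : Set (Matrix ι ι ℂ)} (hW : W ⊆ LinearMap.ker (krausGen K L))
    (hsupp : ∀ A ∈ W, SupportedOn A ρ) : Fdist ρ W ≤ LinearMap.ker (krausGen K L) := by
  classical
  obtain ⟨s, V, l, hl, hV, hρV⟩ := exists_isometry_mul_diagonal_mul hρ
  have hD : (diagonal fun i => (l i : ℂ)).PosDef :=
    PosDef.diagonal fun i => by exact_mod_cast hl i
  rw [← conjMap_apply] at hρV
  subst hρV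
  obtain ⟨hK, hL⟩ := mul_isometry_eq_of_krausGen_conjMap_eq_zero hV hD hinv
  have hker (Y : Matrix s s ℂ) : conjMap V Y ∈ LinearMap.ker (krausGen K L) ↔
      Y ∈ LinearMap.ker (krausGen (conjMap Vᴴ K) fun k => conjMap Vᴴ (L k)) := by
    rw [LinearMap.mem_ker, LinearMap.mem_ker,
      ← map_krausGen (intertwines_conjMap hK) fun k => intertwines_conjMap (hL k),
      (conjMap V).map_eq_zero_iff (conjMap_injective hV)]
  have hdist := (isDistortedAlgebra_ker_krausGen_diagonal
    (conjMap_add_conjTranspose_add_sum hTP hL) hl ((hker _).1 hinv)).map_conjMap hV hD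
  refine (hdist.Fdist_le fun A hA => ?_).trans ?_
  · have hAV := (hsupp A hA).conjMap_conjMap_conjTranspose hV
    exact ⟨conjMap Vᴴ A, (hker _).1 (hAV.symm ▸ hW hA), hAV⟩
  · rintro _ ⟨Y, hY, rfl⟩
    exact (hker Y).2 hY

end Support

/-! ### Kernel of a generator with a globally stable state -/

section Flow

open Filter Topology

theorem exists_flow {V : Type*} [NormedAddCommGroup V] [NormedSpace ℂ V] [FiniteDimensional ℂ V]
    (L : V →ₗ[ℂ] V) : ∃ E : ℝ → V →ₗ[ℂ] V, E 0 = LinearMap.id ∧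
      (∀ Y t, HasDerivAt (fun s => E s Y) (L (E t Y)) t) ∧ ∀ Y, L Y = 0 → ∀ t, E t Y = Y := by
  have : CompleteSpace V := FiniteDimensional.complete ℂ V
  let A : V →L[ℂ] V := LinearMap.toContinuousLinearMap L
  let eval (Y : V) : (V →L[ℂ] V) →L[ℝ] V := (ContinuousLinearMap.apply ℂ V Y).restrictScalars ℝ
  have hzero : NormedSpace.exp ((0 : ℝ) • A) = 1 := by rw [zero_smul, NormedSpace.exp_zero]
  refine ⟨fun t => (NormedSpace.exp (t • A) : V →L[ℂ] V), ?_, fun Y t => ?_, fun Y hY t => ?_⟩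
  · exact congrArg (fun B : V →L[ℂ] V => (B : V →ₗ[ℂ] V)) hzero
  · exact (eval Y).hasFDerivAt.comp_hasDerivAt t (hasDerivAt_exp_smul_const' A t)
  · have hderiv (s : ℝ) : HasDerivAt (fun s : ℝ => NormedSpace.exp (s • A) Y) 0 s := by
      have hAY : eval Y (NormedSpace.exp (s • A) * A) = 0 :=
        (congrArg ⇑(NormedSpace.exp (s • A) : V →L[ℂ] V) hY).trans (map_zero _)
      exact hAY ▸ (eval Y).hasFDerivAt.comp_hasDerivAt s (hasDerivAt_exp_smul_const A s)
    have hconst := is_const_of_deriv_eq_zero (fun s => (hderiv s).differentiableAt)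
      (fun s => (hderiv s).deriv) t 0
    rw [hzero] at hconst
    exact hconst

variable {ι : Type*} [Fintype ι] {L : Matrix ι ι ℂ →ₗ[ℂ] Matrix ι ι ℂ} {ρ : Matrix ι ι ℂ}

theorem IsGAS.tendsto_flow_of_posSemidef (h : IsGAS L ρ)
    {E : ℝ → Matrix ι ι ℂ →ₗ[ℂ] Matrix ι ι ℂ} (hE₀ : E 0 = LinearMap.id)
    (hE : ∀ Y t i j, HasDerivAt (fun s => E s Y i j) (L (E t Y) i j) t)
    {Y : Matrix ι ι ℂ} (hY : Y.PosSemidef) (i j : ι) :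
    Tendsto (fun t => E t Y i j) atTop (𝓝 (Y.trace * ρ i j)) := by
  by_cases htr : Y.trace = 0
  · rw [hY.trace_eq_zero_iff.1 htr]
    simp
  · have hdensity : IsDensity (Y.trace⁻¹ • Y) :=
      ⟨hY.smul (inv_nonneg.2 hY.trace_nonneg), by
        rw [trace_smul, smul_eq_mul, inv_mul_cancel₀ htr]⟩
    have hlim := h.2 _ hdensity (fun t => E t (Y.trace⁻¹ • Y)) (by rw [hE₀]; rfl) (hE _) i j
    refine (hlim.const_mul Y.trace).congr fun t => ?_
    rw [map_smul, Matrix.smul_apply, smul_eq_mul, mul_inv_cancel_left₀ htr]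

theorem IsGAS.tendsto_flow (h : IsGAS L ρ) {E : ℝ → Matrix ι ι ℂ →ₗ[ℂ] Matrix ι ι ℂ}
    (hE₀ : E 0 = LinearMap.id)
    (hE : ∀ Y t i j, HasDerivAt (fun s => E s Y i j) (L (E t Y) i j) t) (Y : Matrix ι ι ℂ)
    (i j : ι) : Tendsto (fun t => E t Y i j) atTop (𝓝 (Y.trace * ρ i j)) := by
  have hY : Y ∈ Submodule.span ℂ {A : Matrix ι ι ℂ | A.PosSemidef} :=
    (span_posSemidef_eq_top (ι := ι)).symm ▸ Submodule.mem_top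
  induction hY using Submodule.span_induction with
  | mem Y hY => exact h.tendsto_flow_of_posSemidef hE₀ hE hY i j
  | zero => simp
  | add Y Z _ _ hY hZ => simpa [add_mul] using hY.add hZ
  | smul c Y _ hY => simpa [mul_assoc] using hY.const_mul c

open scoped Matrix.Norms.Elementwise in
theorem IsGAS.eq_trace_smul (h : IsGAS L ρ) {X : Matrix ι ι ℂ} (hX : L X = 0) :
    X = X.trace • ρ := by
  obtain ⟨E, hE₀, hE, hfix⟩ := exists_flow L
  have hentry (Y : Matrix ι ι ℂ) (t : ℝ) (i j : ι) :
      HasDerivAt (fun s => E s Y i j) (L (E t Y) i j) t :=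
    hasDerivAt_pi.1 (hasDerivAt_pi.1 (hE Y t) i) j
  ext i j
  have hlim := h.tendsto_flow hE₀ hentry X i j
  simp only [hfix X hX] at hlim
  exact tendsto_nhds_unique tendsto_const_nhds hlim

end Flow

/-! ### Neighborhood operators and partial traces -/

section Neighborhood

variable {n : ℕ} {d : Fin n → Type*} {N : Finset (Fin n)}

variable (d N) in
/-- The linear map `A ↦ A ⊗ B`. -/
noncomputable def splitLiftLeft (B : Matrix (nbhdCoIdx d N) (nbhdCoIdx d N) ℂ) :
    Matrix (nbhdIdx d N) (nbhdIdx d N) ℂ →ₗ[ℂ] Matrix (∀ a, d a) (∀ a, d a) ℂ where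
  toFun A := splitLift d N A B
  map_add' A A' := by
    ext i j
    simp [splitLift, add_mul]
  map_smul' c A := by
    ext i j
    simp [splitLift, mul_assoc]

theorem nbhdLift_conjTranspose [∀ a, DecidableEq (d a)]
    (A : Matrix (nbhdIdx d N) (nbhdIdx d N) ℂ) :
    (nbhdLift d N A)ᴴ = nbhdLift d N Aᴴ := by
  rw [nbhdLift, splitLift, conjTranspose_submatrix]
  exact congrArg (submatrix · _ _) ((conjTranspose_kronecker A 1).trans (by rw [conjTranspose_one]))

theorem coLift_one [∀ a, DecidableEq (d a)] : coLift d N 1 = 1 := by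
  rw [coLift, splitLift, ← submatrix_one_equiv (splitEquiv d N)]
  exact congrArg (submatrix · _ _) one_kronecker_one

variable [∀ a, Fintype (d a)]

theorem splitLift_mul (A A' : Matrix (nbhdIdx d N) (nbhdIdx d N) ℂ)
    (B B' : Matrix (nbhdCoIdx d N) (nbhdCoIdx d N) ℂ) :
    splitLift d N A B * splitLift d N A' B' = splitLift d N (A * A') (B * B') := by
  rw [splitLift, splitLift, splitLift, submatrix_mul_equiv]
  exact congrArg (submatrix · _ _) (mul_kronecker_mul A A' B B').symm

theorem nbhdPtrace_conjTranspose (X : Matrix (∀ a, d a) (∀ a, d a) ℂ) :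
    (nbhdPtrace d N X)ᴴ = nbhdPtrace d N Xᴴ := by
  ext i j
  simp [nbhdPtrace]

theorem trace_nbhdPtrace (X : Matrix (∀ a, d a) (∀ a, d a) ℂ) :
    (nbhdPtrace d N X).trace = X.trace := by
  simp only [trace, diag_apply, nbhdPtrace, of_apply]
  rw [← (splitEquiv d N).symm.sum_comp, Fintype.sum_prod_type]

theorem nbhdPtrace_posSemidef {X : Matrix (∀ a, d a) (∀ a, d a) ℂ} (hX : X.PosSemidef) :
    (nbhdPtrace d N X).PosSemidef := by
  have hsum : nbhdPtrace d N X = ∑ k : nbhdCoIdx d N,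
      X.submatrix (fun i => (splitEquiv d N).symm (i, k))
        fun i => (splitEquiv d N).symm (i, k) := by
    ext i j
    simp [nbhdPtrace, Matrix.sum_apply]
  rw [hsum]
  exact posSemidef_sum _ fun k _ => hX.submatrix _

variable [∀ a, DecidableEq (d a)]

theorem coLift_mul_nbhdLift (B : Matrix (nbhdCoIdx d N) (nbhdCoIdx d N) ℂ)
    (A : Matrix (nbhdIdx d N) (nbhdIdx d N) ℂ) :
    coLift d N B * nbhdLift d N A = nbhdLift d N A * coLift d N B := by
  simp only [coLift, nbhdLift, splitLift_mul, Matrix.one_mul, Matrix.mul_one]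

theorem coLift_mul_apply (B : Matrix (nbhdCoIdx d N) (nbhdCoIdx d N) ℂ)
    (X : Matrix (∀ a, d a) (∀ a, d a) ℂ) (i : nbhdIdx d N) (k : nbhdCoIdx d N) (x : ∀ a, d a) :
    (coLift d N B * X) ((splitEquiv d N).symm (i, k)) x =
      ∑ l, B k l * X ((splitEquiv d N).symm (i, l)) x := by
  simp only [Matrix.mul_apply, coLift, splitLift, submatrix_apply, kroneckerMap_apply,
    ← (splitEquiv d N).symm.sum_comp, Equiv.apply_symm_apply, Fintype.sum_prod_type, one_apply]
  simp

theorem nbhdLift_mul_apply (A : Matrix (nbhdIdx d N) (nbhdIdx d N) ℂ)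
    (X : Matrix (∀ a, d a) (∀ a, d a) ℂ) (i : nbhdIdx d N) (k : nbhdCoIdx d N) (x : ∀ a, d a) :
    (nbhdLift d N A * X) ((splitEquiv d N).symm (i, k)) x =
      ∑ j, A i j * X ((splitEquiv d N).symm (j, k)) x := by
  simp only [Matrix.mul_apply, nbhdLift, splitLift, submatrix_apply, kroneckerMap_apply,
    ← (splitEquiv d N).symm.sum_comp, Equiv.apply_symm_apply, Fintype.sum_prod_type, one_apply]
  simp

theorem nbhdPtrace_nbhdLift_mul (A : Matrix (nbhdIdx d N) (nbhdIdx d N) ℂ)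
    (X : Matrix (∀ a, d a) (∀ a, d a) ℂ) :
    nbhdPtrace d N (nbhdLift d N A * X) = A * nbhdPtrace d N X := by
  ext i j
  simp only [nbhdPtrace, of_apply, nbhdLift_mul_apply, Matrix.mul_apply (M := A), Finset.mul_sum]
  exact Finset.sum_comm

theorem nbhdPtrace_mul_nbhdLift (X : Matrix (∀ a, d a) (∀ a, d a) ℂ)
    (A : Matrix (nbhdIdx d N) (nbhdIdx d N) ℂ) :
    nbhdPtrace d N (X * nbhdLift d N A) = nbhdPtrace d N X * A := by
  rw [← conjTranspose_inj, nbhdPtrace_conjTranspose, conjTranspose_mul, nbhdLift_conjTranspose,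
    nbhdPtrace_nbhdLift_mul, conjTranspose_mul, nbhdPtrace_conjTranspose]

theorem mul_nbhdLift_eq_zero {ρ : Matrix (∀ a, d a) (∀ a, d a) ℂ} (hρ : ρ.PosSemidef)
    {Q : Matrix (nbhdIdx d N) (nbhdIdx d N) ℂ} (hQ : nbhdPtrace d N ρ * Q = 0) :
    ρ * nbhdLift d N Q = 0 := by
  have htrace : ((nbhdLift d N Q)ᴴ * ρ * ((nbhdLift d N Q)ᴴ)ᴴ).trace = 0 := by
    rw [conjTranspose_conjTranspose, nbhdLift_conjTranspose, ← trace_nbhdPtrace (N := N),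
      nbhdPtrace_mul_nbhdLift, nbhdPtrace_nbhdLift_mul, Matrix.mul_assoc, hQ, Matrix.mul_zero,
      trace_zero]
  rw [← conjTranspose_inj, conjTranspose_mul, hρ.1.eq, conjTranspose_zero]
  exact mul_eq_zero_of_trace_mul_mul_conjTranspose_eq_zero hρ htrace

variable (d N) in
/-- The linear map `X ↦ Tr_N̄[(I_N ⊗ B) X]`; as `B` varies, its values at `ρ` form the operator
Schmidt span of `ρ`. -/
noncomputable def schmidtMap (B : Matrix (nbhdCoIdx d N) (nbhdCoIdx d N) ℂ) :
    Matrix (∀ a, d a) (∀ a, d a) ℂ →ₗ[ℂ] Matrix (nbhdIdx d N) (nbhdIdx d N) ℂ where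
  toFun X := nbhdPtrace d N (coLift d N B * X)
  map_add' X Y := by
    ext i j
    simp [nbhdPtrace, Matrix.mul_add, Finset.sum_add_distrib]
  map_smul' c X := by
    ext i j
    simp [nbhdPtrace, Finset.mul_sum]

theorem intertwines_schmidtMap (B : Matrix (nbhdCoIdx d N) (nbhdCoIdx d N) ℂ)
    (A : Matrix (nbhdIdx d N) (nbhdIdx d N) ℂ) :
    Intertwines (schmidtMap d N B) (nbhdLift d N A) A where
  map_mul X := by
    change nbhdPtrace d N _ = A * nbhdPtrace d N _
    rw [← Matrix.mul_assoc, coLift_mul_nbhdLift, Matrix.mul_assoc, nbhdPtrace_nbhdLift_mul]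
  map_mul_conjTranspose X := by
    change nbhdPtrace d N _ = nbhdPtrace d N _ * Aᴴ
    rw [nbhdLift_conjTranspose, ← Matrix.mul_assoc, nbhdPtrace_mul_nbhdLift]

theorem supportedOn_schmidtMap {ρ : Matrix (∀ a, d a) (∀ a, d a) ℂ} (hρ : ρ.PosSemidef)
    (B : Matrix (nbhdCoIdx d N) (nbhdCoIdx d N) ℂ) :
    SupportedOn (schmidtMap d N B ρ) (nbhdPtrace d N ρ) := by
  intro Q hQ
  have hright := mul_nbhdLift_eq_zero hρ hQ
  have hleft : nbhdLift d N Qᴴ * ρ = 0 := by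
    rw [← nbhdLift_conjTranspose, ← hρ.1.eq, ← conjTranspose_mul, hright, conjTranspose_zero]
  constructor
  · rw [← conjTranspose_conjTranspose Q, ← (intertwines_schmidtMap B Qᴴ).map_mul_conjTranspose,
      nbhdLift_conjTranspose, conjTranspose_conjTranspose, hright, map_zero]
  · rw [← (intertwines_schmidtMap B Qᴴ).map_mul, hleft, map_zero]

theorem intertwines_splitLiftLeft (B : Matrix (nbhdCoIdx d N) (nbhdCoIdx d N) ℂ)
    (A : Matrix (nbhdIdx d N) (nbhdIdx d N) ℂ) :
    Intertwines (splitLiftLeft d N B) A (nbhdLift d N A) where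
  map_mul X := by
    change splitLift d N _ _ = nbhdLift d N A * splitLift d N _ _
    rw [nbhdLift, splitLift_mul, Matrix.one_mul]
  map_mul_conjTranspose X := by
    change splitLift d N _ _ = splitLift d N _ _ * (nbhdLift d N A)ᴴ
    rw [nbhdLift_conjTranspose, nbhdLift, splitLift_mul, Matrix.mul_one]

theorem effHam_nbhdLift {m : ℕ} (H : Matrix (nbhdIdx d N) (nbhdIdx d N) ℂ)
    (L : Fin m → Matrix (nbhdIdx d N) (nbhdIdx d N) ℂ) :
    effHam (nbhdLift d N H) (fun k => nbhdLift d N (L k)) = nbhdLift d N (effHam H L) := by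
  have hlift (A : Matrix (nbhdIdx d N) (nbhdIdx d N) ℂ) :
      nbhdLift d N A = splitLiftLeft d N 1 A := rfl
  have hjump (k : Fin m) :
      (nbhdLift d N (L k))ᴴ * nbhdLift d N (L k) = nbhdLift d N ((L k)ᴴ * L k) := by
    rw [nbhdLift_conjTranspose, nbhdLift, nbhdLift, splitLift_mul, Matrix.one_mul, nbhdLift]
  simp only [effHam, hjump]
  simp only [hlift, map_sub, map_smul, map_sum]

theorem lindbladMap_nbhdLift {m : ℕ} {H : Matrix (nbhdIdx d N) (nbhdIdx d N) ℂ}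
    (hH : H.IsHermitian) (L : Fin m → Matrix (nbhdIdx d N) (nbhdIdx d N) ℂ) :
    lindbladMap (nbhdLift d N H) (fun k => nbhdLift d N (L k)) =
      krausGen (nbhdLift d N (effHam H L)) fun k => nbhdLift d N (L k) := by
  rw [lindbladMap_eq_krausGen ((nbhdLift_conjTranspose H).trans (congrArg _ hH.eq)),
    effHam_nbhdLift]

end Neighborhood

/-! ### Extended distorted algebras -/

section ExtendedAlgebra

variable {n : ℕ} {d : Fin n → Type*} [∀ a, Fintype (d a)] [∀ a, DecidableEq (d a)]

theorem nbhdPtrace_coLift_single_mul (N : Finset (Fin n)) (ρ : Matrix (∀ a, d a) (∀ a, d a) ℂ)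
    (k l : nbhdCoIdx d N) :
    nbhdPtrace d N (coLift d N (single l k 1) * ρ) =
      ρ.submatrix (fun i => (splitEquiv d N).symm (i, k))
        fun i => (splitEquiv d N).symm (i, l) := by
  ext i j
  simp [nbhdPtrace, coLift_mul_apply, single_apply, ite_and]

theorem sum_splitLift_single (N : Finset (Fin n)) (ρ : Matrix (∀ a, d a) (∀ a, d a) ℂ) :
    ∑ k, ∑ l, splitLift d N (nbhdPtrace d N (coLift d N (single l k 1) * ρ)) (single k l 1) =
      ρ := by
  ext i j
  simp [nbhdPtrace_coLift_single_mul, Matrix.sum_apply, splitLift, single_apply, ite_and]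

theorem mem_extF (N : Finset (Fin n)) (ρ : Matrix (∀ a, d a) (∀ a, d a) ℂ) :
    ρ ∈ extF d N ρ := by
  have hterm (k l : nbhdCoIdx d N) :
      splitLift d N (nbhdPtrace d N (coLift d N (single l k 1) * ρ)) (single k l 1) ∈
        extF d N ρ :=
    Submodule.subset_span ⟨_, Submodule.mem_sInf.2 fun S hS => hS.1 ⟨_, rfl⟩, _, rfl⟩
  have hsum := Submodule.sum_mem _ fun k (_ : k ∈ Finset.univ) =>
    Submodule.sum_mem _ fun l (_ : l ∈ Finset.univ) => hterm k l
  rwa [sum_splitLift_single] at hsum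

theorem extF_le_ker {N : Finset (Fin n)} {ρ : Matrix (∀ a, d a) (∀ a, d a) ℂ}
    (hρ : ρ.PosSemidef)
    {L : Matrix (∀ a, d a) (∀ a, d a) ℂ →ₗ[ℂ] Matrix (∀ a, d a) (∀ a, d a) ℂ}
    (hL : IsNbhdGen d N L) (hinv : L ρ = 0) : extF d N ρ ≤ LinearMap.ker L := by
  obtain ⟨H, hH, m, Lk, rfl⟩ := hL
  rw [lindbladMap_nbhdLift hH] at hinv ⊢
  have hschmidt (B) : krausGen (effHam H Lk) Lk (schmidtMap d N B ρ) = 0 := by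
    rw [← map_krausGen (intertwines_schmidtMap B _) fun k => intertwines_schmidtMap B (Lk k),
      hinv, map_zero]
  have hreduced : krausGen (effHam H Lk) Lk (nbhdPtrace d N ρ) = 0 := by
    rw [← hschmidt 1]
    exact congrArg _ (congrArg _ (by rw [coLift_one, Matrix.one_mul]))
  have hF : Fdist (nbhdPtrace d N ρ) (nbhdSchmidt d N ρ) ≤
      LinearMap.ker (krausGen (effHam H Lk) Lk) := by
    refine Fdist_le_ker_krausGen (nbhdPtrace_posSemidef hρ)
      (effHam_add_conjTranspose_add_sum hH Lk) hreduced ?_ ?_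
    · rintro _ ⟨B, rfl⟩
      exact hschmidt B
    · rintro _ ⟨B, rfl⟩
      exact supportedOn_schmidtMap hρ B
  refine Submodule.span_le.2 ?_
  rintro _ ⟨A, hA, B, rfl⟩
  have hlift := map_krausGen (intertwines_splitLiftLeft B (effHam H Lk))
    (fun k => intertwines_splitLiftLeft B (Lk k)) A
  rw [hF hA, map_zero] at hlift
  exact hlift.symm

end ExtendedAlgebra

/-! ### Statement 7 -/

theorem stmt7
    {n : ℕ} {d : Fin n → Type*} [∀ a, Fintype (d a)] [∀ a, DecidableEq (d a)]
    {M : ℕ} (Nb : Fin M → Finset (Fin n))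
    (ρ : Matrix (∀ a, d a) (∀ a, d a) ℂ) (hρ : IsDensity ρ)
    (h : IsFFQLS d Nb ρ) :
    Submodule.span ℂ {ρ} = ⨅ j, extF d (Nb j) ρ := by
  obtain ⟨Lj, hN, hFF, hG⟩ := h
  apply le_antisymm
  · rw [Submodule.span_singleton_le_iff_mem, Submodule.mem_iInf]
    exact fun j => mem_extF (Nb j) ρ
  · intro X hX
    rw [Submodule.mem_iInf] at hX
    have hinv : ∀ j, Lj j ρ = 0 := hFF ρ hρ hG.1
    have hker : ∀ j, Lj j X = 0 := fun j => extF_le_ker hρ.1 (hN j) (hinv j) (hX j)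
    have hsum : (∑ j, Lj j) X = 0 := by
      rw [LinearMap.sum_apply]
      exact Finset.sum_eq_zero fun j _ => hker j
    rw [hG.eq_trace_smul hsum]
    exact Submodule.smul_mem _ _ (Submodule.mem_span_singleton_self ρ)

end QDS
end

section
/- For each k let L_k be a QDS generator on B(H) with a fixed Lindblad representation with Hamiltonian H_k and noise operators {L_{j,k}}_j, and let L = Σ_k L_k (which has the Lindblad representation with Hamiltonian Σ_k H_k and noise operators ∪_k {L_{j,k}}). Assume: (i) for every k, alg{H_k together with all L_{j,k}} ⊆ alg{Σ_k H_k together with all L_{j,k} over all j, k}; and (ii) there exists a positive-definite density operator ρ with L(ρ) = 0 and L_k(ρ) = 0 for all k. Then every X ∈ ker(L) satisfies X ∈ ker(L_k) for all k; equivalently, ker(L) = ∩_k ker(L_k). -/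
namespace QDS

open Matrix
open scoped ComplexOrder

/-! ### Statement 8 -/

/-!
Let `L†` be the Heisenberg-picture dual of a Lindblad generator `L` with a positive-definite
invariant state `ρ`. Pairing the dissipation identity
`L†(Y†Y) = L†(Y†)Y + Y†L†(Y) + Σⱼ [Lⱼ, Y]†[Lⱼ, Y]` with `ρ` kills the left-hand side, and the
first two terms on the right pair to `Tr (Y† L(Yρ))` and its conjugate; so `Tr (Y† L(Yρ)) = 0`
forces `[Lⱼ, Y] = 0` for all `j`. If `L(Yρ) = 0`, this gives `[Lⱼ, Y] = 0`; then
`L(Yρ) = Y L(ρ) - L†(Y)ρ` shows `L†(Y) = 0`, so `Tr (Y L(Y†ρ)) = Tr (L†(Y) Y†ρ) = 0` and the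
same argument for `Y†` gives `[Lⱼ†, Y] = 0`; what remains of `L†(Y) = 0` is `[H, Y] = 0`.

Thus every element of `ker L` is `Yρ` with `Y` in the commutant of `alg(L)`. A generator that
annihilates `ρ` and has its operators in `alg(L)` commutes with left multiplication by such a
`Y`, so it annihilates `ker L`.
-/

section StarAlgebra

lemma commute_of_mem_adjoin_of_mem_centralizer {R A : Type*} [CommSemiring R] [StarRing R]
    [Semiring A] [StarRing A] [Algebra R A] [StarModule R A] {s : Set A} {Y Z : A}
    (hZ : Z ∈ StarAlgebra.adjoin R s) (hY : Y ∈ StarSubalgebra.centralizer R s) : Commute Z Y :=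
  ((StarSubalgebra.mem_centralizer_iff R).mp
    (StarAlgebra.adjoin_le_centralizer_centralizer R s hZ) Y hY).1.symm

variable {A : Type*} [Ring A] [StarRing A] [Algebra ℂ A] {κ : Type*} [Fintype κ]

/-- The Lindblad generator with Hamiltonian `H` and noise operators `L`, in the Schrödinger
picture. Unlike in `lindbladMap`, the noise operators are indexed by an arbitrary finite type, so
that a sum of generators is again of this form. -/
noncomputable def lindbladian (H : A) (L : κ → A) : A →ₗ[ℂ] A :=
  (-Complex.I) • (LinearMap.mulLeft ℂ H - LinearMap.mulRight ℂ H) +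
    ∑ k, ((LinearMap.mulRight ℂ (star (L k))).comp (LinearMap.mulLeft ℂ (L k)) -
      ((1 : ℂ) / 2) • (LinearMap.mulLeft ℂ (star (L k) * L k) +
        LinearMap.mulRight ℂ (star (L k) * L k)))

/-- The Heisenberg-picture generator, dual to `lindbladian H L` for the trace pairing
`(X, Y) ↦ Tr (X Y)`. -/
noncomputable def heisenbergLindbladian (H : A) (L : κ → A) : A →ₗ[ℂ] A :=
  Complex.I • (LinearMap.mulLeft ℂ H - LinearMap.mulRight ℂ H) +
    ∑ k, ((LinearMap.mulRight ℂ (L k)).comp (LinearMap.mulLeft ℂ (star (L k))) -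
      ((1 : ℂ) / 2) • (LinearMap.mulLeft ℂ (star (L k) * L k) +
        LinearMap.mulRight ℂ (star (L k) * L k)))

lemma lindbladian_apply (H : A) (L : κ → A) (X : A) :
    lindbladian H L X = (-Complex.I) • (H * X - X * H) +
      ∑ k, (L k * X * star (L k) -
        ((1 : ℂ) / 2) • (star (L k) * L k * X + X * (star (L k) * L k))) := by
  simp [lindbladian, LinearMap.sum_apply, mul_assoc]

lemma heisenbergLindbladian_apply (H : A) (L : κ → A) (X : A) :
    heisenbergLindbladian H L X = Complex.I • (H * X - X * H) +
      ∑ k, (star (L k) * X * L k -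
        ((1 : ℂ) / 2) • (star (L k) * L k * X + X * (star (L k) * L k))) := by
  simp [heisenbergLindbladian, LinearMap.sum_apply, mul_assoc]

lemma sum_lindbladian {μ : κ → Type*} [∀ k, Fintype (μ k)] (H : κ → A) (L : ∀ k, μ k → A) :
    ∑ k, lindbladian (H k) (L k) = lindbladian (∑ k, H k) fun p : Σ k, μ k => L p.1 p.2 := by
  ext X
  simp only [LinearMap.sum_apply, lindbladian_apply, Fintype.sum_sigma, Finset.sum_add_distrib,
    Finset.sum_mul, Finset.mul_sum, ← Finset.smul_sum, Finset.sum_sub_distrib]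

lemma heisenbergLindbladian_star [StarModule ℂ A] {H : A} (hH : IsSelfAdjoint H) (L : κ → A)
    (X : A) :
    heisenbergLindbladian H L (star X) = star (heisenbergLindbladian H L X) := by
  simp only [heisenbergLindbladian_apply, star_add, star_sum, star_sub, star_smul, star_mul,
    star_star, hH.star_eq, Complex.star_def, Complex.conj_I, map_div₀, map_one, map_ofNat,
    mul_assoc]
  congr 1
  · module
  · simp only [add_comm]

lemma heisenbergLindbladian_star_mul_self (H : A) (L : κ → A) (X : A) :
    heisenbergLindbladian H L (star X * X) =
      heisenbergLindbladian H L (star X) * X + star X * heisenbergLindbladian H L X +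
        ∑ k, star (L k * X - X * L k) * (L k * X - X * L k) := by
  simp only [heisenbergLindbladian_apply, add_mul, mul_add, Finset.sum_mul, Finset.mul_sum]
  rw [add_add_add_comm, add_assoc, ← Finset.sum_add_distrib, ← Finset.sum_add_distrib]
  congr 1
  · simp only [smul_mul_assoc, mul_smul_comm, sub_mul, mul_sub, mul_assoc]
    module
  · refine Finset.sum_congr rfl fun k _ => ?_
    simp only [star_sub, star_mul, mul_sub, sub_mul, mul_add, add_mul, smul_mul_assoc,
      mul_smul_comm, mul_assoc]
    module

lemma lindbladian_mul_of_commute (H : A) {L : κ → A} {Y : A} (hL : ∀ k, Commute (L k) Y) (X : A) :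
    lindbladian H L (Y * X) = Y * lindbladian H L X - heisenbergLindbladian H L Y * X := by
  simp only [lindbladian_apply, heisenbergLindbladian_apply, add_mul, mul_add, Finset.sum_mul,
    Finset.mul_sum]
  rw [add_sub_add_comm, ← Finset.sum_sub_distrib]
  congr 1
  · simp only [smul_mul_assoc, mul_smul_comm, sub_mul, mul_sub, mul_assoc]
    module
  · refine Finset.sum_congr rfl fun k _ => ?_
    have hYL (Z : A) : Y * (L k * Z) = L k * (Y * Z) := (hL k).symm.left_comm Z
    simp only [(hL k).eq, mul_sub, sub_mul, mul_add, add_mul, smul_mul_assoc, mul_smul_comm,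
      mul_assoc, hYL]
    module

lemma heisenbergLindbladian_eq_zero_of_lindbladian_mul_eq_zero {H : A} {L : κ → A} {ρ Y : A}
    (hρ : IsUnit ρ) (hinv : lindbladian H L ρ = 0) (hL : ∀ k, Commute (L k) Y)
    (hY : lindbladian H L (Y * ρ) = 0) : heisenbergLindbladian H L Y = 0 := by
  rw [lindbladian_mul_of_commute H hL, hinv, mul_zero, zero_sub, neg_eq_zero] at hY
  exact hρ.mul_left_eq_zero.mp hY

lemma heisenbergLindbladian_of_commute (H : A) {L : κ → A} {Y : A} (hL : ∀ k, Commute (L k) Y)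
    (hLstar : ∀ k, Commute (star (L k)) Y) :
    heisenbergLindbladian H L Y = Complex.I • (H * Y - Y * H) := by
  rw [heisenbergLindbladian_apply, add_eq_left]
  refine Finset.sum_eq_zero fun k _ => ?_
  rw [((hLstar k).mul_left (hL k)).eq, (hLstar k).eq, mul_assoc]
  module

end StarAlgebra

section Matrix

open scoped MatrixOrder Matrix.Norms.L2Operator in
lemma trace_mul_mul_conjTranspose_eq_zero_iff {𝕜 m n : Type*} [RCLike 𝕜] [Fintype m] [Fintype n]
    {ρ : Matrix n n 𝕜} (hρ : ρ.PosDef) {C : Matrix m n 𝕜} :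
    (C * ρ * Cᴴ).trace = 0 ↔ C = 0 := by
  classical
  obtain ⟨B, hB, rfl⟩ := CStarAlgebra.isStrictlyPositive_iff_eq_star_mul_self.mp
    hρ.isStrictlyPositive
  have hfactor : C * (star B * B) * Cᴴ = C * Bᴴ * (C * Bᴴ)ᴴ := by
    simp only [star_eq_conjTranspose, conjTranspose_mul, conjTranspose_conjTranspose,
      Matrix.mul_assoc]
  rw [hfactor, trace_mul_conjTranspose_self_eq_zero_iff]
  refine ⟨fun h => ?_, by rintro rfl; exact Matrix.zero_mul _⟩
  have hBstar : IsUnit Bᴴ := hB.star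
  lift Bᴴ to (Matrix n n 𝕜)ˣ using hBstar with U
  simpa [Matrix.mul_assoc] using congr($h * (↑U⁻¹ : Matrix n n 𝕜))

variable {ι : Type*} [Fintype ι] [DecidableEq ι] {κ : Type*} [Fintype κ]

lemma trace_heisenbergLindbladian_mul (H : Matrix ι ι ℂ) (L : κ → Matrix ι ι ℂ)
    (X Y : Matrix ι ι ℂ) :
    (heisenbergLindbladian H L X * Y).trace = (X * lindbladian H L Y).trace := by
  have cycle (A B C : Matrix ι ι ℂ) : (A * (B * C)).trace = (B * (C * A)).trace := by
    rw [trace_mul_comm, mul_assoc]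
  simp only [heisenbergLindbladian_apply, lindbladian_apply, star_eq_conjTranspose, add_mul,
    mul_add, Finset.sum_mul, Finset.mul_sum, trace_add, trace_sum]
  congr 1
  · simp only [smul_mul_assoc, mul_smul_comm, sub_mul, mul_sub, trace_sub, trace_smul, mul_assoc,
      cycle H X Y]
    module
  · refine Finset.sum_congr rfl fun k _ => ?_
    have hjump : ((L k)ᴴ * X * L k * Y).trace = (X * (L k * Y * (L k)ᴴ)).trace := by
      simp only [mul_assoc, cycle (L k)ᴴ X]
    have hdecay : ((L k)ᴴ * L k * X * Y).trace = (X * (Y * ((L k)ᴴ * L k))).trace := by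
      rw [mul_assoc, cycle]
    simp only [smul_mul_assoc, mul_smul_comm, sub_mul, mul_sub, add_mul, mul_add, trace_sub,
      trace_smul, trace_add, hjump, hdecay, mul_assoc X]
    module

lemma trace_conjTranspose_mul_heisenbergLindbladian_mul {H : Matrix ι ι ℂ} (hH : H.IsHermitian)
    (L : κ → Matrix ι ι ℂ) {ρ : Matrix ι ι ℂ} (hρ : ρ.IsHermitian) (Y : Matrix ι ι ℂ) :
    (Yᴴ * heisenbergLindbladian H L Y * ρ).trace = star (Yᴴ * lindbladian H L (Y * ρ)).trace := by
  rw [← trace_heisenbergLindbladian_mul, ← trace_conjTranspose, conjTranspose_mul,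
    ← star_eq_conjTranspose, ← star_eq_conjTranspose, heisenbergLindbladian_star hH]
  simp only [star_eq_conjTranspose, conjTranspose_mul, conjTranspose_conjTranspose, hρ.eq]
  rw [mul_assoc ρ, trace_mul_comm ρ]

section FaithfulInvariantState

variable {H : Matrix ι ι ℂ} {L : κ → Matrix ι ι ℂ} {ρ : Matrix ι ι ℂ}

lemma commute_noise_of_trace_eq_zero (hH : H.IsHermitian) (hρ : ρ.PosDef)
    (hinv : lindbladian H L ρ = 0) {Y : Matrix ι ι ℂ}
    (hY : (Yᴴ * lindbladian H L (Y * ρ)).trace = 0) (k : κ) : Commute (L k) Y := by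
  let C (k : κ) : Matrix ι ι ℂ := L k * Y - Y * L k
  have hdissip : ∑ k, (C k * ρ * (C k)ᴴ).trace = 0 := by
    have h := trace_heisenbergLindbladian_mul H L (star Y * Y) ρ
    rw [hinv, mul_zero, trace_zero, heisenbergLindbladian_star_mul_self, add_mul, add_mul,
      trace_add, trace_add, mul_assoc (heisenbergLindbladian H L _),
      trace_heisenbergLindbladian_mul, star_eq_conjTranspose,
      trace_conjTranspose_mul_heisenbergLindbladian_mul hH L hρ.isHermitian, hY, star_zero,
      add_zero, zero_add, Finset.sum_mul, trace_sum] at h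
    refine (Finset.sum_congr rfl fun k _ => ?_).trans h
    rw [trace_mul_comm, ← mul_assoc, star_eq_conjTranspose]
  have hC := (Finset.sum_eq_zero_iff_of_nonneg fun k _ =>
    (hρ.posSemidef.mul_mul_conjTranspose_same (C k)).trace_nonneg).mp hdissip k (Finset.mem_univ k)
  exact sub_eq_zero.mp ((trace_mul_mul_conjTranspose_eq_zero_iff hρ).mp hC)

theorem mem_centralizer_of_lindbladian_mul_eq_zero (hH : H.IsHermitian) (hρ : ρ.PosDef)
    (hinv : lindbladian H L ρ = 0) {Y : Matrix ι ι ℂ} (hY : lindbladian H L (Y * ρ) = 0) :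
    Y ∈ StarSubalgebra.centralizer ℂ ({H} ∪ Set.range L) := by
  have hL : ∀ k, Commute (L k) Y :=
    commute_noise_of_trace_eq_zero hH hρ hinv (by rw [hY, mul_zero, trace_zero])
  have hdual : heisenbergLindbladian H L Y = 0 :=
    heisenbergLindbladian_eq_zero_of_lindbladian_mul_eq_zero hρ.isUnit hinv hL hY
  have hLstar (k : κ) : Commute (star (L k)) Y := by
    refine (commute_noise_of_trace_eq_zero hH hρ hinv (Y := Yᴴ) ?_ k).star_left
    rw [conjTranspose_conjTranspose, ← trace_heisenbergLindbladian_mul, hdual, zero_mul, trace_zero]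
  have hHY : Commute H Y := by
    rw [heisenbergLindbladian_of_commute H hL hLstar] at hdual
    exact sub_eq_zero.mp ((smul_eq_zero.mp hdual).resolve_left Complex.I_ne_zero)
  rw [StarSubalgebra.mem_centralizer_iff]
  rintro _ (rfl | ⟨k, rfl⟩)
  exacts [⟨hHY, hH.star_eq.symm ▸ hHY⟩, ⟨hL k, hLstar k⟩]

theorem ker_lindbladian_le_of_mem_adjoin {κ' : Type*} [Fintype κ'] (hH : H.IsHermitian)
    (hρ : ρ.PosDef) (hinv : lindbladian H L ρ = 0) {H' : Matrix ι ι ℂ} {L' : κ' → Matrix ι ι ℂ}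
    (hinv' : lindbladian H' L' ρ = 0) (hH' : H' ∈ StarAlgebra.adjoin ℂ ({H} ∪ Set.range L))
    (hL' : ∀ k, L' k ∈ StarAlgebra.adjoin ℂ ({H} ∪ Set.range L)) :
    LinearMap.ker (lindbladian H L) ≤ LinearMap.ker (lindbladian H' L') := by
  intro X hX
  obtain ⟨Y, rfl⟩ : ∃ Y, Y * ρ = X :=
    ⟨X * ρ⁻¹, by rw [mul_assoc, nonsing_inv_mul ρ hρ.det_pos.ne'.isUnit, mul_one]⟩
  have hcomm {Z : Matrix ι ι ℂ} (hZ : Z ∈ StarAlgebra.adjoin ℂ ({H} ∪ Set.range L)) :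
      Commute Z Y :=
    commute_of_mem_adjoin_of_mem_centralizer hZ
      (mem_centralizer_of_lindbladian_mul_eq_zero hH hρ hinv hX)
  have hdual : heisenbergLindbladian H' L' Y = 0 := by
    rw [heisenbergLindbladian_of_commute H' (fun k => hcomm (hL' k))
      (fun k => hcomm (star_mem (hL' k))), (hcomm hH').eq, sub_self, smul_zero]
  rw [LinearMap.mem_ker, lindbladian_mul_of_commute H' fun k => hcomm (hL' k), hinv', hdual,
    mul_zero, zero_mul, sub_zero]

end FaithfulInvariantState

lemma lindbladMap_eq_lindbladian (H : Matrix ι ι ℂ) {m : ℕ} (L : Fin m → Matrix ι ι ℂ) :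
    lindbladMap H L = lindbladian H L :=
  rfl

end Matrix

theorem stmt8_general {ι κ : Type*} [Fintype ι] [DecidableEq ι] [Fintype κ] {μ : κ → Type*}
    [∀ k, Fintype (μ k)] (H : κ → Matrix ι ι ℂ) (hH : (∑ k, H k).IsHermitian)
    (L : ∀ k, μ k → Matrix ι ι ℂ)
    (halg : ∀ k, H k ∈ StarAlgebra.adjoin ℂ
      ({∑ k, H k} ∪ {X : Matrix ι ι ℂ | ∃ k j, X = L k j}))
    {ρ : Matrix ι ι ℂ} (hρ : ρ.PosDef) (hinv : ∀ k, lindbladian (H k) (L k) ρ = 0) :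
    LinearMap.ker (∑ k, lindbladian (H k) (L k)) =
      ⨅ k, LinearMap.ker (lindbladian (H k) (L k)) := by
  have hrange : {X | ∃ k j, X = L k j} = Set.range fun p : Σ k, μ k => L p.1 p.2 := by
    ext X
    simp only [Set.mem_ofPred_eq, Set.mem_range, Sigma.exists, eq_comm]
  rw [hrange] at halg
  refine le_antisymm (le_iInf fun k => ?_) fun X hX => ?_
  · have hsum : lindbladian (∑ k, H k) (fun p : Σ k, μ k => L p.1 p.2) ρ = 0 := by
      rw [← sum_lindbladian, LinearMap.sum_apply, Finset.sum_eq_zero fun k _ => hinv k]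
    rw [sum_lindbladian]
    exact ker_lindbladian_le_of_mem_adjoin hH hρ hsum (hinv k) (halg k) fun j =>
      StarAlgebra.subset_adjoin ℂ _ (Or.inr ⟨⟨k, j⟩, rfl⟩)
  · simp only [Submodule.mem_iInf, LinearMap.mem_ker] at hX
    rw [LinearMap.mem_ker, LinearMap.sum_apply, Finset.sum_eq_zero fun k _ => hX k]

theorem stmt8
    {ι : Type*} [Fintype ι] [DecidableEq ι] {K : ℕ}
    (Hk : Fin K → Matrix ι ι ℂ) (hHk : ∀ k, (Hk k).IsHermitian)
    (m : Fin K → ℕ) (Lkj : ∀ k, Fin (m k) → Matrix ι ι ℂ)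
    (halg : ∀ k, StarAlgebra.adjoin ℂ ({Hk k} ∪ Set.range (Lkj k)) ≤
      StarAlgebra.adjoin ℂ
        ({∑ k, Hk k} ∪ {X : Matrix ι ι ℂ | ∃ k j, X = Lkj k j}))
    (ρ : Matrix ι ι ℂ) (hρ : ρ.PosDef) (hρtr : ρ.trace = 1)
    (hρ0 : (∑ k, lindbladMap (Hk k) (Lkj k)) ρ = 0)
    (hρk : ∀ k, lindbladMap (Hk k) (Lkj k) ρ = 0) :
    LinearMap.ker (∑ k, lindbladMap (Hk k) (Lkj k)) =
      ⨅ k, LinearMap.ker (lindbladMap (Hk k) (Lkj k)) := by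
  simp only [lindbladMap_eq_lindbladian] at hρk ⊢
  exact stmt8_general Hk (isSelfAdjoint_sum _ fun k _ => hHk k) Lkj
    (fun k => halg k (StarAlgebra.subset_adjoin ℂ _ (Or.inl rfl))) hρ hρk

end QDS
end

section
/- Let T = Σ_k p_k T_k where each T_k : B(H) → B(H) is CPTP, p_k > 0 and Σ_k p_k = 1. If there exists a positive-definite density operator ρ with T(ρ) = ρ and T_k(ρ) = ρ for all k, then fix(T) = ∩_k fix(T_k); in particular, every X with T(X) = X satisfies T_k(X) = X for all k. -/
namespace QDS

open Matrix
open scoped ComplexOrder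

/-! ### Statement 9 -/

/- The weighted norm `‖X‖² = Tr(X ρ⁻¹ Xᴴ)` is Hilbertian, hence strictly convex, and each `T k` is a
contraction for it. A fixed point `X` of the mixture is thus a convex combination of the points
`T k X` of the closed ball of radius `‖X‖`, and strict convexity forces `T k X = X` for every `k`.

The contraction property only needs 2-positivity and trace preservation: by the Schur complement,
`[X ρ⁻¹ Xᴴ, X; Xᴴ, ρ]` is positive semidefinite; applying `T` blockwise and taking the Schur
complement again gives `T X (T ρ)⁻¹ (T X)ᴴ ≤ T (X ρ⁻¹ Xᴴ)`. -/

theorem eq_of_sum_smul_eq_of_norm_le {E κ : Type*} [NormedAddCommGroup E] [NormedSpace ℝ E]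
    [StrictConvexSpace ℝ E] {s : Finset κ} {w : κ → ℝ} {z : κ → E} {x : E}
    (hw : ∀ k ∈ s, 0 < w k) (hw_sum : ∑ k ∈ s, w k = 1) (hz : ∀ k ∈ s, ‖z k‖ ≤ ‖x‖)
    (hx : ∑ k ∈ s, w k • z k = x) {j : κ} (hj : j ∈ s) : z j = x := by
  have hconst : ∀ k ∈ s, z k = z j := by
    intro k hk
    by_contra hkj
    have hlt : ‖∑ i ∈ s, w i • z i‖ < ‖x‖ :=
      norm_sum_lt_of_strictConvexSpace (fun i hi => (hw i hi).le) hw_sum hk hj hkj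
        (hw k hk).ne' (hw j hj).ne' hz
    exact hlt.ne (congrArg norm hx)
  calc
    z j = ∑ k ∈ s, w k • z j := by rw [← Finset.sum_smul, hw_sum, one_smul]
    _ = ∑ k ∈ s, w k • z k := Finset.sum_congr rfl fun k hk => by rw [hconst k hk]
    _ = x := hx

theorem eq_of_sum_smul_eq_of_trace_le {𝕜 ι κ : Type*} [RCLike 𝕜] [Fintype ι] {A : Matrix ι ι 𝕜}
    (hA : A.PosDef) {s : Finset κ} {w : κ → ℝ} {Z : κ → Matrix ι ι 𝕜} {X : Matrix ι ι 𝕜}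
    (hw : ∀ k ∈ s, 0 < w k) (hw_sum : ∑ k ∈ s, w k = 1)
    (hZ : ∀ k ∈ s, (Z k * A * (Z k)ᴴ).trace ≤ (X * A * Xᴴ).trace)
    (hX : ∑ k ∈ s, (w k : 𝕜) • Z k = X) {j : κ} (hj : j ∈ s) : Z j = X := by
  let : NormedAddCommGroup (Matrix ι ι 𝕜) := A.toMatrixNormedAddCommGroup hA
  let : InnerProductSpace 𝕜 (Matrix ι ι 𝕜) := A.toMatrixInnerProductSpace hA.posSemidef
  let : InnerProductSpace ℝ (Matrix ι ι 𝕜) := InnerProductSpace.rclikeToReal 𝕜 _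
  have hnorm (k : κ) (hk : k ∈ s) : ‖Z k‖ ≤ ‖X‖ :=
    Real.sqrt_le_sqrt (RCLike.re_monotone (hZ k hk))
  exact eq_of_sum_smul_eq_of_norm_le hw hw_sum hnorm hX hj

section TwoPositive

variable {𝕜 m n : Type*} [RCLike 𝕜]

/-- A linear map `T` between matrix algebras is 2-positive if its ampliation `id ⊗ T` to `2 × 2`
block matrices preserves positive semidefiniteness. The ampliation is written out on the four blocks
of a matrix indexed by `m ⊕ m`. -/
def IsTwoPositive (T : Matrix m m 𝕜 →ₗ[𝕜] Matrix n n 𝕜) : Prop :=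
  ∀ A B C D : Matrix m m 𝕜, (fromBlocks A B C D).PosSemidef →
    (fromBlocks (T A) (T B) (T C) (T D)).PosSemidef

theorem isTwoPositive_of_eq_sum_mul_mul_conjTranspose [Fintype m] [Finite n]
    {κ : Type*} [Fintype κ] {T : Matrix m m 𝕜 →ₗ[𝕜] Matrix n n 𝕜} {M : κ → Matrix n m 𝕜}
    (hT : ∀ X, T X = ∑ k, M k * X * (M k)ᴴ) : IsTwoPositive T := by
  intro A B C D hABCD
  let N (k : κ) : Matrix (n ⊕ n) (m ⊕ m) 𝕜 := fromBlocks (M k) 0 0 (M k)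
  have hblocks : fromBlocks (T A) (T B) (T C) (T D) =
      ∑ k, N k * fromBlocks A B C D * (N k)ᴴ := by
    ext (i | i) (j | j) <;>
      simp [N, hT, fromBlocks_multiply, fromBlocks_conjTranspose, Matrix.sum_apply]
  rw [hblocks]
  exact posSemidef_sum _ fun k _ => hABCD.mul_mul_conjTranspose_same (N k)

variable [Fintype m] [DecidableEq m] [Fintype n] [DecidableEq n]
  {T : Matrix m m 𝕜 →ₗ[𝕜] Matrix n n 𝕜} {ρ : Matrix m m 𝕜}

theorem IsTwoPositive.posSemidef_map_sub (hT : IsTwoPositive T) (hρ : ρ.PosDef)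
    (hTρ : (T ρ).PosDef) (X : Matrix m m 𝕜) :
    (T (X * ρ⁻¹ * Xᴴ) - T X * (T ρ)⁻¹ * (T X)ᴴ).PosSemidef := by
  let := hρ.isUnit.invertible
  let := hTρ.isUnit.invertible
  have hblock : (fromBlocks (X * ρ⁻¹ * Xᴴ) X Xᴴ ρ).PosSemidef :=
    (PosDef.fromBlocks₂₂ _ X hρ).2 (by rw [sub_self]; exact .zero)
  have himage := hT _ _ _ _ hblock
  have hstar : (T X)ᴴ = T Xᴴ := (isHermitian_fromBlocks_iff.1 himage.isHermitian).2.1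
  rw [← hstar] at himage
  exact (PosDef.fromBlocks₂₂ _ (T X) hTρ).1 himage

theorem IsTwoPositive.trace_map_mul_inv_mul_conjTranspose_le (hT : IsTwoPositive T)
    (hT_trace : ∀ X, (T X).trace = X.trace) (hρ : ρ.PosDef) (hTρ : (T ρ).PosDef)
    (X : Matrix m m 𝕜) :
    (T X * (T ρ)⁻¹ * (T X)ᴴ).trace ≤ (X * ρ⁻¹ * Xᴴ).trace := by
  have hsub := (hT.posSemidef_map_sub hρ hTρ X).trace_nonneg
  rwa [trace_sub, hT_trace, sub_nonneg] at hsub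

end TwoPositive

section CPTP

variable {ι : Type*} [Fintype ι] [DecidableEq ι] {T : Matrix ι ι ℂ →ₗ[ℂ] Matrix ι ι ℂ}

theorem IsCPTP.isTwoPositive (hT : IsCPTP T) : IsTwoPositive T :=
  let ⟨_, _, hM, _⟩ := hT
  isTwoPositive_of_eq_sum_mul_mul_conjTranspose hM

theorem IsCPTP.trace_map (hT : IsCPTP T) (X : Matrix ι ι ℂ) : (T X).trace = X.trace := by
  obtain ⟨m, M, hM, hM_sum⟩ := hT
  calc
    (T X).trace = ∑ k, ((M k)ᴴ * M k * X).trace := by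
      rw [hM, trace_sum]
      exact Finset.sum_congr rfl fun k _ => trace_mul_cycle _ _ _
    _ = X.trace := by rw [← trace_sum, ← Finset.sum_mul, hM_sum, one_mul]

end CPTP

theorem stmt9_general {ι κ : Type*} [Fintype ι] [Fintype κ]
    (p : κ → ℝ) (hp : ∀ k, 0 < p k) (hpsum : ∑ k, p k = 1)
    (T : κ → (Matrix ι ι ℂ →ₗ[ℂ] Matrix ι ι ℂ)) (hT : ∀ k, IsTwoPositive (T k))
    (hT_trace : ∀ k X, (T k X).trace = X.trace)
    (ρ : Matrix ι ι ℂ) (hρ : ρ.PosDef) (hρk : ∀ k, T k ρ = ρ) :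
    fixSet (∑ k, (p k : ℂ) • T k) = ⋂ k, fixSet (T k) := by
  classical
  ext X
  simp only [fixSet, Set.mem_ofPred_eq, Set.mem_iInter, LinearMap.sum_apply, LinearMap.smul_apply]
  constructor
  · intro hX k
    have hle (k : κ) : (T k X * ρ⁻¹ * (T k X)ᴴ).trace ≤ (X * ρ⁻¹ * Xᴴ).trace := by
      simpa only [hρk] using (hT k).trace_map_mul_inv_mul_conjTranspose_le (hT_trace k) hρ
        ((hρk k).symm ▸ hρ) X
    exact eq_of_sum_smul_eq_of_trace_le hρ.inv (fun k _ => hp k) hpsum (fun k _ => hle k) hX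
      (Finset.mem_univ k)
  · intro hX
    simp only [hX, ← Finset.sum_smul, ← Complex.ofReal_sum, hpsum, Complex.ofReal_one, one_smul]

theorem stmt9
    {ι : Type*} [Fintype ι] [DecidableEq ι] {K : ℕ}
    (p : Fin K → ℝ) (hp : ∀ k, 0 < p k) (hpsum : ∑ k, p k = 1)
    (T : Fin K → (Matrix ι ι ℂ →ₗ[ℂ] Matrix ι ι ℂ)) (hT : ∀ k, IsCPTP (T k))
    (ρ : Matrix ι ι ℂ) (hρ : ρ.PosDef) (hρtr : ρ.trace = 1)
    (hρfix : (∑ k, (p k : ℂ) • T k) ρ = ρ) (hρk : ∀ k, T k ρ = ρ) :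
    fixSet (∑ k, (p k : ℂ) • T k) = ⋂ k, fixSet (T k) := by
  exact stmt9_general p hp hpsum T (fun k => (hT k).isTwoPositive) (fun k => (hT k).trace_map)
    ρ hρ hρk

end QDS
end
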